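/- arXiv:2212.03642 — 2 statements merged into one kernel-verified Lean document; each statement's English description precedes it below -/
import Mathlib

section
/- Assume λ, α, θ > 0, β + θ < 1, (H2), m_τ, K_τ > 0 and 0 < τ < 1, and let (X, ρ) be a minimizer of J_{(X⁰,ρ⁰)} over 𝒜 with X ≥ X⁰. Then the continuous representative ρ̄ of ρ on [0,X] satisfies ρ̄(x) > 0 for every x ∈ [0,X], and ln ρ ∈ L¹(ℝ₊) (where ln ρ ≡ 0 a.e. on (X,∞) since ρ ≡ 1 there). -/
/-!
The idea is that creating a little mass where the density nearly vanishes lowers the functional,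
because `f'(r) → -∞` as `r → 0`.

Suppose `ρ̄(x₀) ≤ 0`. Given a small `κ`, continuity provides an interval `(a,b) ⊆ (0,X)` next to
`x₀` on which `ρ ≤ κ`. Compare `ρ` with `σ = ρ + κ 1_{(a,b)}`, whose mass is larger by
`m = κ (b - a)`.

* By convexity of `f`, the entropy changes by at most `m (ln (2κ) + 1 - β)` (`bump_adm`).
* The boundary term `θ|M|` grows by at most `θ m`, and the penalty does not increase.
* The new mass can be exchanged with the reservoir at the origin, so `𝐖₂²` grows by at most
  `Λ² m` (`W2sq_bump`). If `M(ρ,ρ⁰) ≥ 0`, the reservoir of `ρ⁰` is enlarged and a product plan is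
  added (`coupling_add`). If `M(ρ,ρ⁰) < 0`, the interval is shortened until `m ≤ |M|`, and a
  fraction of the plan leaving the origin is made to start from `(a,b)` (`coupling_move`).

Hence `0 ≤ m (ln (2κ) + C)` with `C` independent of `κ`, which fails for small `κ`.
So `ρ̄` is positive on the compact interval `[0,X]`; there `ln ρ̄` is continuous, and `ln ρ = 0`
a.e. beyond `X`, so that `ln ρ` is integrable.

Since `2κ < 1`, both `ρ` and `σ` differ from `1` on `(a,b)`. Therefore `x_σ = x_ρ`
(`xA_bump`), and the interval `(0,Λ)` in the definition of the measures `ν` is unchanged.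
-/

open MeasureTheory Real Set ENNReal Filter Topology

noncomputable section

/-- The threshold `ρ₋ = exp(β - θ - 1)`. -/
def rhoMinus (β θ : ℝ) : ℝ := Real.exp (β - θ - 1)

/-- The threshold `ρ₊ = exp(β + θ - 1)`. -/
def rhoPlus (β θ : ℝ) : ℝ := Real.exp (β + θ - 1)

/-- Membership in the class `𝔸` of admissible densities on `ℝ₊`:
nonnegative a.e., locally integrable together with `ρ ln ρ`, and `≡ 1` a.e. eventually. -/
def MemAdm (ρ : ℝ → ℝ) : Prop :=
  (∀ᵐ x : ℝ, 0 < x → 0 ≤ ρ x) ∧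
  LocallyIntegrableOn ρ (Ioi 0) volume ∧
  LocallyIntegrableOn (fun x => ρ x * Real.log (ρ x)) (Ioi 0) volume ∧
  ∃ x : ℝ, 0 < x ∧ (∀ᵐ y : ℝ, y ∈ Ioi x → ρ y = 1)

/-- `x_ρ`, the infimum of the points after which `ρ ≡ 1` a.e. -/
def xA (ρ : ℝ → ℝ) : ℝ :=
  sInf {x : ℝ | 0 < x ∧ ∀ᵐ y : ℝ, y ∈ Ioi x → ρ y = 1}

/-- Membership of a pair `(X, ρ)` in the admissible set `𝒜`. -/
def MemAdmSet (X : ℝ) (ρ : ℝ → ℝ) : Prop := MemAdm ρ ∧ xA ρ ≤ X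

/-- `𝐌(ρ) = -∫_{ℝ₊} (1 - ρ)`. -/
def Mfun (ρ : ℝ → ℝ) : ℝ := -∫ x in Ioi (0:ℝ), (1 - ρ x)

/-- `M(ρ, ρ̃) = 𝐌(ρ) - 𝐌(ρ̃)`. -/
def Mdiff (ρ ρt : ℝ → ℝ) : ℝ := Mfun ρ - Mfun ρt

/-- `f(r) = r (ln r - β) + β`. -/
def fEnt (β r : ℝ) : ℝ := r * (Real.log r - β) + β

/-- The measure `ν(ρ, ρ̃) = ρ · Leb⌊(0,Λ) + (M(ρ̃,ρ))₊ δ₀`, `Λ = max(x_ρ, x_ρ̃)`. -/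
def nuMeas (ρ ρt : ℝ → ℝ) : Measure ℝ :=
  (volume.withDensity (fun x => ENNReal.ofReal (ρ x))).restrict
      (Ioo 0 (max (xA ρ) (xA ρt)))
    + (ENNReal.ofReal (Mdiff ρt ρ)) • Measure.dirac 0

/-- The squared Wasserstein distance `𝐖₂²(ρ, ρ̃)`: infimum of the quadratic transport
cost over couplings of `ν(ρ,ρ̃)` and `ν(ρ̃,ρ)`. -/
def W2sq (ρ ρt : ℝ → ℝ) : ℝ :=
  sInf {r : ℝ | ∃ γ : Measure (ℝ × ℝ),
    γ.map Prod.fst = nuMeas ρ ρt ∧ γ.map Prod.snd = nuMeas ρt ρ ∧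
    r = ∫ p, (p.1 - p.2)^2 ∂γ}

/-- The penalty function `p_τ(m) = (K_τ/2) ((-m - m_τ)₊)²`. -/
def ptau (Kτ mτ m : ℝ) : ℝ := Kτ / 2 * (max (-m - mτ) 0)^2

/-- The energy functional `E_{(X⁰,ρ⁰)}(X,ρ)`. -/
def Efun (α β θ : ℝ) (ρ0 : ℝ → ℝ) (X : ℝ) (ρ : ℝ → ℝ) : ℝ :=
  (∫ x in Ioi (0:ℝ), fEnt β (ρ x)) + θ * |Mdiff ρ ρ0| - α * X

/-- The squared tensorized metric `𝐝²((X,ρ),(X⁰,ρ⁰))`. -/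
def dsq (lam : ℝ) (X0 : ℝ) (ρ0 : ℝ → ℝ) (X : ℝ) (ρ : ℝ → ℝ) : ℝ :=
  W2sq ρ ρ0 + lam * (X - X0)^2

/-- The JKO functional `J_{(X⁰,ρ⁰)}`. -/
def Jfun (lam α β θ τ Kτ mτ : ℝ) (X0 : ℝ) (ρ0 : ℝ → ℝ) (X : ℝ) (ρ : ℝ → ℝ) : ℝ :=
  dsq lam X0 ρ0 X ρ / (2 * τ) + Efun α β θ ρ0 X ρ + ptau Kτ mτ (Mdiff ρ ρ0)

/-- `(X, ρ)` is a minimizer of the JKO functional over `𝒜`. -/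
def IsJKOMin (lam α β θ τ Kτ mτ : ℝ) (X0 : ℝ) (ρ0 : ℝ → ℝ) (X : ℝ) (ρ : ℝ → ℝ) : Prop :=
  MemAdmSet X ρ ∧
  ∀ Y : ℝ, ∀ σ : ℝ → ℝ, MemAdmSet Y σ →
    Jfun lam α β θ τ Kτ mτ X0 ρ0 X ρ ≤ Jfun lam α β θ τ Kτ mτ X0 ρ0 Y σ

/-- Hypothesis (H2) on the initial data `(X⁰, ρ⁰)`, with bounds `ρ_min, ρ_max`
and with `ρ0'` a derivative of `ρ⁰` on `[0,X⁰]` witnessing `C^{1,1}` regularity. -/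
def H2 (β θ X0 ρmin ρmax : ℝ) (ρ0 ρ0' : ℝ → ℝ) : Prop :=
  0 < X0 ∧
  (∀ x : ℝ, 0 < ρ0 x) ∧
  (∀ x ∈ Icc 0 X0, HasDerivWithinAt ρ0 (ρ0' x) (Icc 0 X0) x) ∧
  (∃ K : NNReal, LipschitzOnWith K ρ0' (Icc 0 X0)) ∧
  (∀ x : ℝ, X0 < x → ρ0 x = 1) ∧
  ρ0 0 ∈ Icc (rhoMinus β θ) (rhoPlus β θ) ∧
  0 < ρmin ∧ (∀ x ∈ Ioc 0 X0, ρmin ≤ ρ0 x ∧ ρ0 x ≤ ρmax) ∧ ρmax ≤ 1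

/-- The monotone transport structure in the case `M(ρ,ρ⁰) ≥ 0`: a nondecreasing map
`T₊ : [0,X] → [0,X]`, vanishing on `[0,ℓ₊]`, pushing `ρ·Leb⌊(ℓ₊,X)` to `ρ⁰·Leb⌊(0,X)`,
with `M = ∫₀^{ℓ₊} ρ` and realizing the squared Wasserstein distance. -/
def TransportPlus (ρ0 ρ : ℝ → ℝ) (X : ℝ) (T : ℝ → ℝ) (ℓ : ℝ) : Prop :=
  0 ≤ ℓ ∧ Measurable T ∧ MonotoneOn T (Icc 0 X) ∧
  (∀ x ∈ Icc 0 X, T x ∈ Icc 0 X) ∧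
  (∀ x ∈ Icc 0 ℓ, T x = 0) ∧ T X = X ∧
  Measure.map T ((volume.withDensity (fun x => ENNReal.ofReal (ρ x))).restrict (Ioo ℓ X))
    = (volume.withDensity (fun x => ENNReal.ofReal (ρ0 x))).restrict (Ioo 0 X) ∧
  Mdiff ρ ρ0 = ∫ x in (0:ℝ)..ℓ, ρ x ∧
  W2sq ρ ρ0 = ∫ x in (0:ℝ)..X, (x - T x)^2 * ρ x

/-- The monotone transport structure in the case `M(ρ,ρ⁰) < 0`. -/
def TransportMinus (ρ0 ρ : ℝ → ℝ) (X : ℝ) (T : ℝ → ℝ) (ℓ : ℝ) : Prop :=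
  0 < ℓ ∧ Measurable T ∧ MonotoneOn T (Icc 0 X) ∧
  (∀ x ∈ Icc 0 X, T x ∈ Icc ℓ X) ∧
  T 0 = ℓ ∧ T X = X ∧
  Measure.map T ((volume.withDensity (fun x => ENNReal.ofReal (ρ x))).restrict (Ioo 0 X))
    = (volume.withDensity (fun x => ENNReal.ofReal (ρ0 x))).restrict (Ioo ℓ X) ∧
  -(Mdiff ρ ρ0) = ∫ y in (0:ℝ)..ℓ, ρ0 y ∧
  W2sq ρ ρ0 = (∫ x in (0:ℝ)..X, (x - T x)^2 * ρ x) + ∫ y in (0:ℝ)..ℓ, y^2 * ρ0 y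

/-- Transport structure with sign convention: `T` is `T₊` (with some `ℓ₊`, and `ℓ₋ = ℓ`
is taken `= 0`) when `M ≥ 0`, and `T₋` with `ℓ₋ = ℓ > 0` when `M < 0`. -/
def TransportStruct (ρ0 ρ : ℝ → ℝ) (X : ℝ) (T : ℝ → ℝ) (ℓ : ℝ) : Prop :=
  (0 ≤ Mdiff ρ ρ0 ∧ ℓ = 0 ∧ ∃ ℓp : ℝ, TransportPlus ρ0 ρ X T ℓp) ∨
  (Mdiff ρ ρ0 < 0 ∧ TransportMinus ρ0 ρ X T ℓ)

/-- `ρ̄` is the continuous representative of `ρ` on `[0,X]`. -/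
def ContRep (X : ℝ) (ρ ρb : ℝ → ℝ) : Prop :=
  ContinuousOn ρb (Icc 0 X) ∧ (∀ᵐ x : ℝ, x ∈ Ioo 0 X → ρ x = ρb x)

/-! ### Integrability and the threshold `x_ρ` -/

/-- A function that agrees a.e. on `(0,X)` with one continuous on `[0,X]` and vanishes a.e.
on `(X,∞)` is integrable on `ℝ₊`. -/
lemma integrableOn_Ioi_of_contOn {X : ℝ} {g h : ℝ → ℝ} (hX : 0 ≤ X)
    (hg : ContinuousOn g (Icc 0 X)) (h1 : ∀ᵐ x : ℝ, x ∈ Ioo 0 X → h x = g x)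
    (h2 : ∀ᵐ x : ℝ, x ∈ Ioi X → h x = 0) : IntegrableOn h (Ioi 0) volume := by
  have hu : Ioi (0:ℝ) = Ioc 0 X ∪ Ioi X := (Ioc_union_Ioi_eq_Ioi hX).symm
  rw [hu, integrableOn_union]
  constructor
  · rw [integrableOn_Ioc_iff_integrableOn_Ioo]
    refine IntegrableOn.congr_fun_ae
      ((hg.integrableOn_compact isCompact_Icc).mono_set Ioo_subset_Icc_self) ?_
    exact (ae_restrict_iff' measurableSet_Ioo).2 (h1.mono fun x hx hm => (hx hm).symm)
  · refine IntegrableOn.congr_fun_ae (integrableOn_zero) ?_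
    exact (ae_restrict_iff' measurableSet_Ioi).2 (h2.mono fun x hx hm => (hx hm).symm)

/-- `ρ ≡ 1` a.e. already beyond the infimum `x_ρ` itself. -/
lemma ae_eq_one_of_xA_le {ρ : ℝ → ℝ} (h : MemAdm ρ) {X : ℝ} (hX : xA ρ ≤ X) :
    ∀ᵐ y : ℝ, y ∈ Ioi X → ρ y = 1 := by
  have hne : {x : ℝ | 0 < x ∧ ∀ᵐ y : ℝ, y ∈ Ioi x → ρ y = 1}.Nonempty := h.2.2.2
  have key : ∀ n : ℕ, ∀ᵐ y : ℝ, y ∈ Ioi (X + 1 / ((n:ℝ) + 1)) → ρ y = 1 := by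
    intro n
    have hn : (0:ℝ) < 1 / ((n:ℝ) + 1) := by positivity
    obtain ⟨s, hs, hlt⟩ := exists_lt_of_csInf_lt hne
      (show xA ρ < X + 1 / ((n:ℝ) + 1) by linarith)
    filter_upwards [hs.2] with y hy hy2
    exact hy (lt_trans hlt hy2)
  filter_upwards [ae_all_iff.2 key] with y hy hyX
  obtain ⟨n, hn⟩ := exists_nat_one_div_lt (sub_pos.2 (mem_Ioi.1 hyX))
  exact hy n (by simp only [mem_Ioi]; linarith)

lemma xA_nonneg (ρ : ℝ → ℝ) : 0 ≤ xA ρ := Real.sInf_nonneg fun _ hx => hx.1.le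

/-! ### Modifying couplings -/

lemma cost_ae_le {γ : Measure (ℝ × ℝ)} {L : ℝ}
    (h1 : (γ.map Prod.fst) (Icc 0 L)ᶜ = 0) (h2 : (γ.map Prod.snd) (Icc 0 L)ᶜ = 0) :
    ∀ᵐ p ∂γ, ‖(p.1 - p.2)^2‖ ≤ L^2 := by
  rw [Measure.map_apply measurable_fst measurableSet_Icc.compl] at h1
  rw [Measure.map_apply measurable_snd measurableSet_Icc.compl] at h2
  have h1' : ∀ᵐ p ∂γ, p.1 ∈ Icc 0 L := h1
  have h2' : ∀ᵐ p ∂γ, p.2 ∈ Icc 0 L := h2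
  filter_upwards [h1', h2'] with p hp hq
  rw [Real.norm_of_nonneg (sq_nonneg _), sq_le_sq]
  rw [mem_Icc] at hp hq
  rw [abs_le]
  have : |L| = L := abs_of_nonneg (hp.1.trans hp.2)
  rw [this]
  constructor <;> linarith [hp.1, hp.2, hq.1, hq.2]

lemma cost_integrable {γ : Measure (ℝ × ℝ)} [IsFiniteMeasure γ] {L : ℝ}
    (h1 : (γ.map Prod.fst) (Icc 0 L)ᶜ = 0) (h2 : (γ.map Prod.snd) (Icc 0 L)ᶜ = 0) :
    Integrable (fun p : ℝ × ℝ => (p.1 - p.2)^2) γ :=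
  Integrable.of_bound (by fun_prop) (L^2) (cost_ae_le h1 h2)

lemma cost_le {γ : Measure (ℝ × ℝ)} [IsFiniteMeasure γ] {L : ℝ}
    (h1 : (γ.map Prod.fst) (Icc 0 L)ᶜ = 0) (h2 : (γ.map Prod.snd) (Icc 0 L)ᶜ = 0) :
    ∫ p, (p.1 - p.2)^2 ∂γ ≤ (γ univ).toReal * L^2 := by
  have h := norm_integral_le_of_norm_le_const (cost_ae_le h1 h2)
  have h' := (le_abs_self _).trans h
  rw [mul_comm] at h'
  exact h'

lemma isFinite_of_map_fst {γ : Measure (ℝ × ℝ)} {N : Measure ℝ} [IsFiniteMeasure N]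
    (h : γ.map Prod.fst = N) : IsFiniteMeasure γ := by
  constructor
  have : γ univ = N univ := by rw [← h, Measure.map_apply measurable_fst .univ, preimage_univ]
  rw [this]; exact measure_lt_top _ _

/-- Extra mass `P` in the first marginal can be matched with mass at the origin in the
second one, at a cost of at most `L²` per unit of mass. -/
lemma coupling_add {γ : Measure (ℝ × ℝ)} {N N0 P : Measure ℝ} [IsFiniteMeasure N]
    [IsFiniteMeasure P] {L : ℝ} (hL : 0 ≤ L)
    (hN : N (Icc 0 L)ᶜ = 0) (hN0 : N0 (Icc 0 L)ᶜ = 0) (hP : P (Icc 0 L)ᶜ = 0)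
    (h1 : γ.map Prod.fst = N) (h2 : γ.map Prod.snd = N0) :
    ∃ γ' : Measure (ℝ × ℝ), γ'.map Prod.fst = N + P ∧
      γ'.map Prod.snd = N0 + P univ • Measure.dirac 0 ∧
      ∫ p, (p.1 - p.2)^2 ∂γ' ≤ ∫ p, (p.1 - p.2)^2 ∂γ + (P univ).toReal * L^2 := by
  have := isFinite_of_map_fst h1
  have f2 : (P.prod (Measure.dirac (0:ℝ))).map Prod.fst = P := by
    rw [Measure.map_fst_prod]; simp
  have s2 : (P.prod (Measure.dirac (0:ℝ))).map Prod.snd = P univ • Measure.dirac 0 :=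
    Measure.map_snd_prod
  have d0 : (P univ • Measure.dirac (0:ℝ)) (Icc 0 L)ᶜ = 0 := by
    simp [Measure.dirac_apply' _ measurableSet_Icc.compl, hL]
  refine ⟨γ + P.prod (Measure.dirac 0), ?_, ?_, ?_⟩
  · rw [Measure.map_add _ _ measurable_fst, h1, f2]
  · rw [Measure.map_add _ _ measurable_snd, h2, s2]
  · rw [integral_add_measure (cost_integrable (L := L) (h1 ▸ hN) (h2 ▸ hN0))
      (cost_integrable (L := L) (f2.symm ▸ hP) (s2.symm ▸ d0))]
    have := cost_le (γ := P.prod (Measure.dirac (0:ℝ))) (L := L) (f2.symm ▸ hP) (s2.symm ▸ d0)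
    have hm : (P.prod (Measure.dirac (0:ℝ))) univ = P univ := by
      rw [← univ_prod_univ, Measure.prod_prod]; simp
    rw [hm] at this
    linarith

/-- If the first marginal has an atom of mass `c = c' + P(ℝ)` at the origin, the part `P(ℝ)`
of it can be redistributed according to `P`, at a cost of at most `L²` per unit of mass: the
fraction `P(ℝ)/c` of the plan leaving the origin is replaced by a product plan. -/
lemma coupling_move {γ : Measure (ℝ × ℝ)} {A N0 P : Measure ℝ} [IsFiniteMeasure A]
    [IsFiniteMeasure P] {L : ℝ} {c c' : ℝ≥0∞} (hc : c ≠ 0) (hct : c ≠ ∞)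
    (hcc : c = c' + P univ) (hA0 : A {0} = 0) (hL : 0 ≤ L)
    (hA : A (Icc 0 L)ᶜ = 0) (hN0 : N0 (Icc 0 L)ᶜ = 0) (hP : P (Icc 0 L)ᶜ = 0)
    (h1 : γ.map Prod.fst = A + c • Measure.dirac 0) (h2 : γ.map Prod.snd = N0) :
    ∃ γ' : Measure (ℝ × ℝ), γ'.map Prod.fst = A + P + c' • Measure.dirac 0 ∧
      γ'.map Prod.snd = N0 ∧
      ∫ p, (p.1 - p.2)^2 ∂γ' ≤ ∫ p, (p.1 - p.2)^2 ∂γ + (P univ).toReal * L^2 := by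
  have : IsFiniteMeasure (c • Measure.dirac (0:ℝ)) := Measure.smul_finite _ hct
  have := isFinite_of_map_fst h1
  have d0 : (c • Measure.dirac (0:ℝ)) (Icc 0 L)ᶜ = 0 := by
    simp [Measure.dirac_apply' _ measurableSet_Icc.compl, hL]
  have hm0 : MeasurableSet ({0} : Set ℝ) := measurableSet_singleton 0
  set s : Set (ℝ × ℝ) := Prod.fst ⁻¹' {0} with hs
  have hsm : MeasurableSet s := measurable_fst hm0
  set γ0 := γ.restrict s with hγ0
  set γ1 := γ.restrict sᶜ with hγ1
  have hsum : γ0 + γ1 = γ := Measure.restrict_add_restrict_compl hsm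
  have hAr : A.restrict {0} = 0 := Measure.restrict_eq_zero.2 hA0
  have f0 : γ0.map Prod.fst = c • Measure.dirac 0 := by
    rw [hγ0, hs, ← Measure.restrict_map measurable_fst hm0, h1, Measure.restrict_add, hAr,
      Measure.restrict_smul, restrict_dirac' hm0]
    simp
  have f1 : γ1.map Prod.fst = A := by
    rw [hγ1, hs, ← preimage_compl, ← Measure.restrict_map measurable_fst hm0.compl, h1,
      Measure.restrict_add, Measure.restrict_smul, restrict_dirac' hm0.compl]
    simp only [mem_compl_iff, mem_singleton_iff, not_true_eq_false, if_false, smul_zero, add_zero]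
    have := Measure.restrict_add_restrict_compl (μ := A) hm0
    rwa [hAr, zero_add] at this
  set μ0 := γ0.map Prod.snd with hμ0
  have : IsFiniteMeasure μ0 := by rw [hμ0]; infer_instance
  have g0u : γ0 univ = c := by
    have : (γ0.map Prod.fst) univ = c := by rw [f0]; simp
    rwa [Measure.map_apply measurable_fst .univ, preimage_univ] at this
  have mu : μ0 univ = c := by
    rw [hμ0, Measure.map_apply measurable_snd .univ, preimage_univ, g0u]
  have s01 : μ0 + γ1.map Prod.snd = N0 := by
    rw [hμ0, ← Measure.map_add _ _ measurable_snd, hsum, h2]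
  have hμ0N : μ0 (Icc 0 L)ᶜ = 0 := by
    have := congrArg (fun m : Measure ℝ => m (Icc 0 L)ᶜ) s01
    simp only [Measure.add_apply, hN0, add_eq_zero] at this
    exact this.1
  have h1N : (γ1.map Prod.snd) (Icc 0 L)ᶜ = 0 := by
    have := congrArg (fun m : Measure ℝ => m (Icc 0 L)ᶜ) s01
    simp only [Measure.add_apply, hN0, add_eq_zero] at this
    exact this.2
  have hfr : c' / c + P univ / c = 1 := by
    rw [← ENNReal.add_div, ← hcc, ENNReal.div_self hc hct]
  have hfr1 : c' / c ≤ 1 := hfr ▸ le_self_add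
  set Q : Measure (ℝ × ℝ) := c⁻¹ • P.prod μ0 with hQ
  have hci : c⁻¹ ≠ ∞ := ENNReal.inv_ne_top.2 hc
  have : IsFiniteMeasure Q := Measure.smul_finite _ hci
  have fQ : Q.map Prod.fst = P := by
    rw [hQ, Measure.map_smul, Measure.map_fst_prod, mu, smul_smul,
      ENNReal.inv_mul_cancel hc hct, one_smul]
  have sQ : Q.map Prod.snd = (P univ / c) • μ0 := by
    rw [hQ, Measure.map_smul, Measure.map_snd_prod, smul_smul, div_eq_mul_inv, mul_comm]
  have hQu : Q univ = P univ := by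
    rw [← fQ, Measure.map_apply measurable_fst .univ, preimage_univ]
  have sQ0 : (Q.map Prod.snd) (Icc 0 L)ᶜ = 0 := by rw [sQ]; simp [hμ0N]
  refine ⟨γ1 + (c' / c) • γ0 + Q, ?_, ?_, ?_⟩
  · rw [Measure.map_add _ _ measurable_fst, Measure.map_add _ _ measurable_fst,
      Measure.map_smul, f1, f0, fQ, smul_smul, ENNReal.div_mul_cancel hc hct]
    abel
  · rw [Measure.map_add _ _ measurable_snd, Measure.map_add _ _ measurable_snd,
      Measure.map_smul, sQ, ← hμ0, add_assoc, ← add_smul, hfr, one_smul, add_comm, s01]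
  · have i0 := cost_integrable (γ := γ0) (L := L) (f0.symm ▸ d0) hμ0N
    have i1 := cost_integrable (γ := γ1) (L := L) (f1.symm ▸ hA) h1N
    have iQ := cost_integrable (γ := Q) (L := L) (fQ.symm ▸ hP) sQ0
    have hft : c' / c ≠ ∞ := ne_top_of_le_ne_top ENNReal.one_ne_top hfr1
    rw [integral_add_measure (i1.add_measure (i0.smul_measure hft)) iQ,
      integral_add_measure i1 (i0.smul_measure hft), integral_smul_measure, ← hsum,
      integral_add_measure i0 i1]
    have b := cost_le (γ := Q) (L := L) (fQ.symm ▸ hP) sQ0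
    rw [hQu] at b
    have p0 : 0 ≤ ∫ p, (p.1 - p.2)^2 ∂γ0 := integral_nonneg fun p => sq_nonneg _
    have t1 : (c' / c).toReal ≤ 1 := by
      simpa using ENNReal.toReal_mono ENNReal.one_ne_top hfr1
    have := mul_le_mul_of_nonneg_right t1 p0
    rw [smul_eq_mul]
    linarith

/-- Finite measures of equal mass admit a coupling. -/
lemma exists_coupling {N N0 : Measure ℝ} [IsFiniteMeasure N] [IsFiniteMeasure N0]
    (h : N univ = N0 univ) :
    ∃ γ : Measure (ℝ × ℝ), γ.map Prod.fst = N ∧ γ.map Prod.snd = N0 := by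
  by_cases h0 : N univ = 0
  · refine ⟨0, ?_, ?_⟩
    · rw [Measure.map_zero, Measure.measure_univ_eq_zero.1 h0]
    · rw [Measure.map_zero, Measure.measure_univ_eq_zero.1 (h.symm.trans h0)]
  · have ht : N univ ≠ ∞ := measure_ne_top _ _
    refine ⟨(N univ)⁻¹ • N.prod N0, ?_, ?_⟩
    · rw [Measure.map_smul, Measure.map_fst_prod, ← h, smul_smul,
        ENNReal.inv_mul_cancel h0 ht, one_smul]
    · rw [Measure.map_smul, Measure.map_snd_prod, smul_smul,
        ENNReal.inv_mul_cancel h0 ht, one_smul]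

/-! ### The entropy of a perturbed density -/

/-- The tangent-line bound `f(r + κ) - f(r) ≤ κ f'(r + κ)`, followed by `r + κ ≤ 2κ`. -/
lemma fEnt_add_le {β r κ : ℝ} (hr : 0 ≤ r) (hκ : 0 < κ) (hrκ : r ≤ κ) :
    fEnt β (r + κ) ≤ fEnt β r + κ * (Real.log (2 * κ) + 1 - β) := by
  have hs : 0 < r + κ := by linarith
  have h1 : r * Real.log (r + κ) - κ ≤ r * Real.log r := by
    rcases hr.eq_or_lt with h | h
    · subst h; simp [hκ.le]
    · have := Real.log_le_sub_one_of_pos (div_pos hs h)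
      rw [Real.log_div hs.ne' h.ne'] at this
      have h2 := mul_le_mul_of_nonneg_left this hr
      have h3 : r * ((r + κ) / r - 1) = κ := by field_simp; ring
      linarith
  have h2 : Real.log (r + κ) ≤ Real.log (2 * κ) := Real.log_le_log hs (by linarith)
  have h3 := mul_le_mul_of_nonneg_left h2 hκ.le
  unfold fEnt
  linarith

/-! ### Adding a small bump to a density -/

/-- The density `ρ + κ 1_{(a,b)}`. -/
def bump (ρ : ℝ → ℝ) (κ a b : ℝ) : ℝ → ℝ := fun x => ρ x + (Ioo a b).indicator (fun _ => κ) x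

/-- The absolutely continuous part of `ν(ρ, ρ̃)`. -/
def acPart (ρ : ℝ → ℝ) (Λ : ℝ) : Measure ℝ :=
  (volume.withDensity (fun x => ENNReal.ofReal (ρ x))).restrict (Ioo 0 Λ)

lemma acPart_eq (ρ : ℝ → ℝ) (Λ : ℝ) :
    acPart ρ Λ = (volume.restrict (Ioo 0 Λ)).withDensity (fun x => ENNReal.ofReal (ρ x)) :=
  restrict_withDensity measurableSet_Ioo _

lemma acPart_bump {ρ : ℝ → ℝ} {κ a b Λ : ℝ} (hρ : ∀ᵐ x : ℝ, 0 < x → 0 ≤ ρ x) (hκ : 0 ≤ κ)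
    (hI : Ioo a b ⊆ Ioo 0 Λ) :
    acPart (bump ρ κ a b) Λ = acPart ρ Λ + ENNReal.ofReal κ • volume.restrict (Ioo a b) := by
  have hm : Measurable ((Ioo a b).indicator (fun _ : ℝ => ENNReal.ofReal κ)) :=
    measurable_const.indicator measurableSet_Ioo
  have : (fun x => ENNReal.ofReal (bump ρ κ a b x)) =ᵐ[volume.restrict (Ioo 0 Λ)]
      (fun x => ENNReal.ofReal (ρ x)) + (Ioo a b).indicator (fun _ : ℝ => ENNReal.ofReal κ) := by
    refine (ae_restrict_iff' measurableSet_Ioo).2 (hρ.mono fun x hx hm => ?_)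
    by_cases h : x ∈ Ioo a b
    · simp [bump, h, ENNReal.ofReal_add (hx hm.1) hκ]
    · simp [bump, h]
  rw [acPart_eq, withDensity_congr_ae this, withDensity_add_right _ hm, ← acPart_eq,
    withDensity_indicator measurableSet_Ioo, withDensity_const,
    Measure.restrict_restrict measurableSet_Ioo, inter_eq_left.2 hI]

lemma integrableOn_and_Mfun_eq {ρ : ℝ → ℝ} {Λ : ℝ} (hΛ : 0 ≤ Λ)
    (hi : IntegrableOn (fun x => 1 - ρ x) (Ioi 0)) (h1 : ∀ᵐ x : ℝ, x ∈ Ioi Λ → ρ x = 1) :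
    IntegrableOn ρ (Ioo 0 Λ) ∧ Mfun ρ = (∫ x in Ioo 0 Λ, ρ x) - Λ := by
  have hc : IntegrableOn (fun _ : ℝ => (1:ℝ)) (Ioo 0 Λ) := by simp
  have hi' : IntegrableOn (fun x => 1 - ρ x) (Ioo 0 Λ) := hi.mono_set Ioo_subset_Ioi_self
  have hρ : IntegrableOn ρ (Ioo 0 Λ) := by
    have := hc.sub hi'
    refine this.congr_fun (fun x _ => ?_) measurableSet_Ioo
    simp
  refine ⟨hρ, ?_⟩
  have e : ∫ x in Ioi (0:ℝ), (1 - ρ x) = ∫ x in Ioc 0 Λ, (1 - ρ x) := by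
    refine setIntegral_eq_of_subset_of_ae_sdiff_eq_zero measurableSet_Ioi.nullMeasurableSet
      Ioc_subset_Ioi_self (h1.mono fun x hx hm => ?_)
    rw [hx, sub_self]
    by_contra h
    exact hm.2 ⟨hm.1, not_lt.1 h⟩
  rw [Mfun, e, integral_Ioc_eq_integral_Ioo, integral_sub hc hρ]
  simp [hΛ]

lemma acPart_univ {ρ : ℝ → ℝ} {Λ : ℝ} (hρ : ∀ᵐ x : ℝ, 0 < x → 0 ≤ ρ x)
    (hi : IntegrableOn ρ (Ioo 0 Λ)) :
    acPart ρ Λ univ = ENNReal.ofReal (∫ x in Ioo 0 Λ, ρ x) := by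
  rw [acPart_eq, withDensity_apply _ .univ, Measure.restrict_univ,
    ofReal_integral_eq_lintegral_ofReal hi]
  exact (ae_restrict_iff' measurableSet_Ioo).2 (hρ.mono fun x hx hm => hx hm.1)

lemma acPart_compl (ρ : ℝ → ℝ) (Λ : ℝ) : acPart ρ Λ (Icc 0 Λ)ᶜ = 0 := by
  rw [acPart, Measure.restrict_apply measurableSet_Icc.compl]
  have : (Icc 0 Λ)ᶜ ∩ Ioo 0 Λ = ∅ := by
    ext x; simp only [mem_inter_iff, mem_compl_iff, mem_empty_iff_false, iff_false]
    exact fun h => h.1 (Ioo_subset_Icc_self h.2)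
  rw [this, measure_empty]

lemma acPart_zero (ρ : ℝ → ℝ) (Λ : ℝ) : acPart ρ Λ {0} = 0 := by
  rw [acPart, Measure.restrict_apply (measurableSet_singleton 0)]
  simp

/-- Transferring couplings of `ν(ρ, ρ̃)` and `ν(ρ̃, ρ)` to couplings for `σ`. A first coupling is
required because the infimum of the empty set is `0`. -/
lemma W2sq_le_add {ρ σ ρt : ℝ → ℝ} {c : ℝ}
    (hne : ∃ γ : Measure (ℝ × ℝ), γ.map Prod.fst = nuMeas ρ ρt ∧ γ.map Prod.snd = nuMeas ρt ρ)
    (h : ∀ γ : Measure (ℝ × ℝ), γ.map Prod.fst = nuMeas ρ ρt → γ.map Prod.snd = nuMeas ρt ρ →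
      ∃ γ' : Measure (ℝ × ℝ), γ'.map Prod.fst = nuMeas σ ρt ∧ γ'.map Prod.snd = nuMeas ρt σ ∧
        ∫ p, (p.1 - p.2)^2 ∂γ' ≤ ∫ p, (p.1 - p.2)^2 ∂γ + c) :
    W2sq σ ρt ≤ W2sq ρ ρt + c := by
  rw [← sub_le_iff_le_add]
  obtain ⟨γ, a, b⟩ := hne
  refine le_csInf ⟨_, γ, a, b, rfl⟩ ?_
  rintro r ⟨γ, a, b, rfl⟩
  obtain ⟨γ', a', b', hle⟩ := h γ a b
  rw [sub_le_iff_le_add]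
  refine le_trans (csInf_le ⟨0, ?_⟩ ⟨γ', a', b', rfl⟩) hle
  rintro r ⟨γ, -, -, rfl⟩
  exact integral_nonneg fun p => sq_nonneg _

/-- Creating the mass `κ(b-a)` raises the squared Wasserstein distance by at most `Λ²` per
unit of mass, because the new mass can be exchanged with the reservoir at the origin. When the
reservoir sits on the side of `ρ`, it must be large enough to supply that mass. -/
lemma W2sq_bump {ρ ρt : ℝ → ℝ} {κ a b Λ : ℝ} (hΛ : Λ = max (xA ρ) (xA ρt))
    (hρ : ∀ᵐ x : ℝ, 0 < x → 0 ≤ ρ x) (hρt : ∀ᵐ x : ℝ, 0 < x → 0 ≤ ρt x)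
    (hi : IntegrableOn (fun x => 1 - ρ x) (Ioi 0)) (h1 : ∀ᵐ x : ℝ, x ∈ Ioi Λ → ρ x = 1)
    (hit : IntegrableOn (fun x => 1 - ρt x) (Ioi 0)) (h1t : ∀ᵐ x : ℝ, x ∈ Ioi Λ → ρt x = 1)
    (hκ : 0 < κ) (hab : a < b) (hI : Ioo a b ⊆ Ioo 0 Λ)
    (hxA : xA (bump ρ κ a b) = xA ρ)
    (hM : Mdiff (bump ρ κ a b) ρt = Mdiff ρ ρt + κ * (b - a))
    (hm : Mdiff ρ ρt < 0 → κ * (b - a) ≤ -Mdiff ρ ρt) :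
    W2sq (bump ρ κ a b) ρt ≤ W2sq ρ ρt + κ * (b - a) * Λ^2 := by
  have hΛ0 : 0 ≤ Λ := hΛ ▸ le_max_of_le_left (xA_nonneg ρ)
  obtain ⟨hi, hMρ⟩ := integrableOn_and_Mfun_eq hΛ0 hi h1
  obtain ⟨hit, hMt⟩ := integrableOn_and_Mfun_eq hΛ0 hit h1t
  have hu := acPart_univ hρ hi
  have hut := acPart_univ hρt hit
  have hsw : ∀ σ : ℝ → ℝ, Mdiff ρt σ = -Mdiff σ ρt := fun σ => by unfold Mdiff; ring
  have hMd : Mdiff ρ ρt = (∫ x in Ioo 0 Λ, ρ x) - ∫ x in Ioo 0 Λ, ρt x := by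
    rw [Mdiff, hMρ, hMt]; ring
  have p0 : 0 ≤ ∫ x in Ioo 0 Λ, ρ x :=
    setIntegral_nonneg_of_ae_restrict
      ((ae_restrict_iff' measurableSet_Ioo).2 (hρ.mono fun x hx hm => hx hm.1))
  have pt : 0 ≤ ∫ x in Ioo 0 Λ, ρt x :=
    setIntegral_nonneg_of_ae_restrict
      ((ae_restrict_iff' measurableSet_Ioo).2 (hρt.mono fun x hx hm => hx hm.1))
  set M := Mdiff ρ ρt with hMdef
  set P : Measure ℝ := ENNReal.ofReal κ • volume.restrict (Ioo a b) with hP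
  have hPu : P univ = ENNReal.ofReal (κ * (b - a)) := by
    simp [hP, ENNReal.ofReal_mul hκ.le]
  have hmp : 0 < κ * (b - a) := mul_pos hκ (sub_pos.2 hab)
  have hPc : P (Icc 0 Λ)ᶜ = 0 := by
    rw [hP, Measure.smul_apply, Measure.restrict_apply measurableSet_Icc.compl]
    have : (Icc 0 Λ)ᶜ ∩ Ioo a b = ∅ := by
      ext x; simp only [mem_inter_iff, mem_compl_iff, mem_empty_iff_false, iff_false]
      exact fun h => h.1 (Ioo_subset_Icc_self (hI h.2))
    rw [this, measure_empty, smul_zero]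
  have n1 : nuMeas ρ ρt = acPart ρ Λ + ENNReal.ofReal (-M) • Measure.dirac 0 := by
    rw [nuMeas, ← hΛ, hsw, acPart]
  have n2 : nuMeas ρt ρ = acPart ρt Λ + ENNReal.ofReal M • Measure.dirac 0 := by
    rw [nuMeas, max_comm, ← hΛ, acPart]
  have n3 : nuMeas (bump ρ κ a b) ρt
      = acPart ρ Λ + P + ENNReal.ofReal (-(M + κ * (b - a))) • Measure.dirac 0 := by
    rw [nuMeas, hxA, ← hΛ, hsw, hM, ← acPart, acPart_bump hρ hκ.le hI]
  have n4 : nuMeas ρt (bump ρ κ a b)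
      = acPart ρt Λ + ENNReal.ofReal (M + κ * (b - a)) • Measure.dirac 0 := by
    rw [nuMeas, max_comm, hxA, ← hΛ, hM, acPart]
  have fP : IsFiniteMeasure P := ⟨by rw [hPu]; exact ENNReal.ofReal_lt_top⟩
  have fA : IsFiniteMeasure (acPart ρ Λ) := ⟨by rw [hu]; exact ENNReal.ofReal_lt_top⟩
  have fAt : IsFiniteMeasure (acPart ρt Λ) := ⟨by rw [hut]; exact ENNReal.ofReal_lt_top⟩
  have fd : ∀ r : ℝ, IsFiniteMeasure (ENNReal.ofReal r • Measure.dirac (0:ℝ)) := fun r =>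
    Measure.smul_finite _ ENNReal.ofReal_ne_top
  have dc : ∀ r : ℝ≥0∞, (r • Measure.dirac (0:ℝ)) (Icc 0 Λ)ᶜ = 0 := fun r => by
    simp [Measure.dirac_apply' _ measurableSet_Icc.compl, hΛ0]
  have hPr : (P univ).toReal = κ * (b - a) := by rw [hPu, ENNReal.toReal_ofReal hmp.le]
  refine W2sq_le_add ?_ ?_
  · rw [n1, n2]
    have := fd M
    have := fd (-M)
    refine exists_coupling ?_
    simp only [Measure.add_apply, Measure.smul_apply, measure_univ, smul_eq_mul, mul_one, hu, hut]
    rcases le_total 0 M with h | h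
    · rw [ENNReal.ofReal_of_nonpos (by linarith : -M ≤ 0), add_zero, ← ENNReal.ofReal_add pt h]
      congr 1; linarith
    · rw [ENNReal.ofReal_of_nonpos h, add_zero, ← ENNReal.ofReal_add p0 (by linarith)]
      congr 1; linarith
  · intro γ g1 g2
    rw [n1] at g1
    rw [n2] at g2
    rw [n3, n4, ← hPr]
    rcases le_or_gt 0 M with h | h
    · rw [ENNReal.ofReal_of_nonpos (by linarith : -M ≤ 0), zero_smul, add_zero] at g1
      rw [ENNReal.ofReal_of_nonpos (by linarith : -(M + _) ≤ 0), zero_smul, add_zero]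
      obtain ⟨γ', a1, a2, a3⟩ := coupling_add hΛ0 (acPart_compl ρ Λ)
        (by rw [Measure.add_apply, acPart_compl, dc, add_zero]) hPc g1 g2
      refine ⟨γ', a1, ?_, a3⟩
      rw [a2, hPr, hPu, ENNReal.ofReal_add h hmp.le, add_smul, add_assoc]
    · have hm := hm h
      rw [ENNReal.ofReal_of_nonpos h.le, zero_smul, add_zero] at g2
      rw [hPr, ENNReal.ofReal_of_nonpos (by linarith : M + κ * (b - a) ≤ 0), zero_smul, add_zero,
        ← hPr]
      refine coupling_move (c := ENNReal.ofReal (-M)) ?_ ENNReal.ofReal_ne_top ?_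
        (acPart_zero ρ Λ) hΛ0 (acPart_compl ρ Λ) (acPart_compl ρt Λ) hPc g1 g2
      · rw [Ne, ENNReal.ofReal_eq_zero, not_le]; linarith
      · rw [hPr, hPu, ← ENNReal.ofReal_add (by linarith) hmp.le]
        congr 1; ring

/-- A density bounded by a small `κ` on `(a,b)`, and its bump, both differ from `1` there;
hence they share the same `x_ρ`, and `(a,b)` lies below it. -/
lemma xA_bump {ρ : ℝ → ℝ} {κ a b : ℝ} (hadm : MemAdm ρ) (hab : a < b)
    (hκ : 0 < κ) (hκ1 : 2 * κ < 1) (hsm : ∀ᵐ x : ℝ, x ∈ Ioo a b → ρ x ≤ κ) :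
    xA (bump ρ κ a b) = xA ρ ∧ b ≤ xA ρ := by
  constructor
  · have hiff : ∀ᵐ x : ℝ, bump ρ κ a b x = 1 ↔ ρ x = 1 := by
      filter_upwards [hsm] with x hx
      by_cases h : x ∈ Ioo a b
      · have := hx h
        simp only [bump, indicator_of_mem h]
        constructor <;> intro <;> linarith
      · simp [bump, h]
    unfold xA
    congr 1
    ext x
    refine and_congr_right fun _ => ?_
    constructor
    · intro h; filter_upwards [h, hiff] with y h1 h2 h3 using h2.1 (h1 h3)
    · intro h; filter_upwards [h, hiff] with y h1 h2 h3 using h2.2 (h1 h3)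
  · by_contra! hlt
    have h1 := ae_eq_one_of_xA_le hadm le_rfl
    have hne : (Ioo (max a (xA ρ)) b).Nonempty := nonempty_Ioo.2 (max_lt hab hlt)
    have hpos := isOpen_Ioo.measure_pos volume hne
    refine hpos.ne' (measure_mono_null ?_ (ae_iff.1 (h1.and hsm)))
    rintro x ⟨hx1, hx2⟩ ⟨h3, h4⟩
    have e := h3 (mem_Ioi.2 ((le_max_right _ _).trans_lt hx1))
    have := h4 ⟨(le_max_left _ _).trans_lt hx1, hx2⟩
    linarith

/-- A bump on a set where the density is small remains admissible, and it changes the entropy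
by at most `κ (ln (2κ) + 1 - β)` per unit of length, a quantity that beats any linear cost as
`κ → 0`. -/
lemma bump_adm {ρ : ℝ → ℝ} {κ a b β : ℝ} (hadm : MemAdm ρ) (ha : 0 ≤ a) (hab : a < b)
    (hκ : 0 < κ) (hκ1 : 2 * κ < 1) (hsm : ∀ᵐ x : ℝ, x ∈ Ioo a b → ρ x ≤ κ)
    (hf : IntegrableOn (fun x => fEnt β (ρ x)) (Ioi 0)) :
    MemAdm (bump ρ κ a b) ∧
      ∫ x in Ioi (0:ℝ), fEnt β (bump ρ κ a b x) ≤
        (∫ x in Ioi (0:ℝ), fEnt β (ρ x)) + κ * (b - a) * (Real.log (2 * κ) + 1 - β) := by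
  have hsub : Ioo a b ⊆ Ioi 0 := fun x hx => ha.trans_lt hx.1
  have hfin : (volume.restrict (Ioi (0:ℝ))) (Ioo a b) ≠ ∞ := by
    rw [Measure.restrict_apply measurableSet_Ioo]
    exact ne_top_of_le_ne_top (by simp) (measure_mono inter_subset_left)
  have hind : ∀ c : ℝ, IntegrableOn ((Ioo a b).indicator (fun _ => c)) (Ioi 0) := fun c =>
    (integrable_indicator_iff measurableSet_Ioo).2 (integrableOn_const hfin)
  have hρm : AEStronglyMeasurable ρ (volume.restrict (Ioi 0)) := hadm.2.1.aestronglyMeasurable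
  have hσm : AEStronglyMeasurable (bump ρ κ a b) (volume.restrict (Ioi 0)) :=
    hρm.add (hind κ).aestronglyMeasurable
  have cont := Real.continuous_mul_log
  set D : ℝ → ℝ := fun x =>
    bump ρ κ a b x * Real.log (bump ρ κ a b x) - ρ x * Real.log (ρ x) with hD
  have bd : ∀ r : ℝ, 0 ≤ r → r ≤ 1 → |r * Real.log r| ≤ 1 := by
    intro r h0 h1
    rcases h0.eq_or_lt with h | h
    · subst h; simp
    · rw [mul_comm]; exact (Real.abs_log_mul_self_lt r h h1).le
  have hDi : IntegrableOn D (Ioi 0) := by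
    refine Integrable.mono' (hind 2)
      ((cont.comp_aestronglyMeasurable hσm).sub (cont.comp_aestronglyMeasurable hρm)) ?_
    refine (ae_restrict_iff' measurableSet_Ioi).2 ?_
    filter_upwards [hadm.1, hsm] with x h0 h1 hx
    by_cases h : x ∈ Ioo a b
    · have h0 := h0 hx
      have h1 := h1 h
      simp only [hD, bump, indicator_of_mem h]
      have e1 := bd (ρ x) h0 (by linarith)
      have e2 := bd (ρ x + κ) (by linarith) (by linarith)
      exact (abs_sub _ _).trans (by linarith)
    · simp [hD, bump, h]
  refine ⟨⟨?_, ?_, ?_, ?_⟩, ?_⟩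
  · filter_upwards [hadm.1] with x hx h0
    exact add_nonneg (hx h0) (indicator_nonneg (fun _ _ => hκ.le) x)
  · exact hadm.2.1.add (hind κ).locallyIntegrableOn
  · have := hadm.2.2.1.add hDi.locallyIntegrableOn
    refine this.congr (ae_of_all _ fun x => ?_)
    simp [hD]
  · obtain ⟨x, hx0, hx⟩ := hadm.2.2.2
    refine ⟨max x b, lt_max_of_lt_left hx0, ?_⟩
    filter_upwards [hx] with y hy hm
    have hyb : y ∉ Ioo a b := fun h => not_lt.2 (le_max_right x b) (lt_trans (mem_Ioi.1 hm) h.2)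
    simp only [bump, indicator_of_notMem hyb, add_zero]
    exact hy ((le_max_left x b).trans_lt hm)
  · have hfσ : IntegrableOn (fun x => fEnt β (bump ρ κ a b x)) (Ioi 0) := by
      have h := (hf.add hDi).sub (hind (β * κ))
      refine h.congr (ae_of_all _ fun x => ?_)
      by_cases h : x ∈ Ioo a b
      · simp only [hD, bump, fEnt, indicator_of_mem h, Pi.add_apply, Pi.sub_apply]; ring
      · simp [hD, bump, fEnt, h]
    have e := hind (κ * (Real.log (2 * κ) + 1 - β))
    have hle : ∫ x in Ioi (0:ℝ), fEnt β (bump ρ κ a b x) ≤ ∫ x in Ioi (0:ℝ), (fEnt β (ρ x) +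
        (Ioo a b).indicator (fun _ => κ * (Real.log (2 * κ) + 1 - β)) x) := by
      refine integral_mono_ae hfσ (hf.add e) ?_
      refine (ae_restrict_iff' measurableSet_Ioi).2 ?_
      filter_upwards [hadm.1, hsm] with x h0 h1 hx
      by_cases h : x ∈ Ioo a b
      · simp only [bump, indicator_of_mem h]
        exact fEnt_add_le (h0 hx) hκ (h1 h)
      · simp [bump, h]
    rw [integral_add hf e, integral_indicator measurableSet_Ioo,
      Measure.restrict_restrict measurableSet_Ioo, inter_eq_left.2 hsub] at hle
    simp only [integral_const, MeasurableSet.univ, measureReal_restrict_apply, univ_inter,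
      Real.volume_real_Ioo_of_le hab.le, smul_eq_mul] at hle
    linarith

lemma Mfun_bump {ρ : ℝ → ℝ} {κ a b : ℝ} (hi : IntegrableOn (fun x => 1 - ρ x) (Ioi 0))
    (ha : 0 ≤ a) (hab : a < b) : Mfun (bump ρ κ a b) = Mfun ρ + κ * (b - a) := by
  have hsub : Ioo a b ⊆ Ioi 0 := fun x hx => ha.trans_lt hx.1
  have hfin : (volume.restrict (Ioi (0:ℝ))) (Ioo a b) ≠ ∞ := by
    rw [Measure.restrict_apply measurableSet_Ioo]
    exact ne_top_of_le_ne_top (by simp) (measure_mono inter_subset_left)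
  have e : IntegrableOn ((Ioo a b).indicator (fun _ => κ)) (Ioi 0) :=
    (integrable_indicator_iff measurableSet_Ioo).2 (integrableOn_const hfin)
  have : ∫ x in Ioi (0:ℝ), (1 - bump ρ κ a b x) = (∫ x in Ioi (0:ℝ), (1 - ρ x)) - κ * (b - a) := by
    have h : ∀ x, 1 - bump ρ κ a b x = (1 - ρ x) - (Ioo a b).indicator (fun _ => κ) x :=
      fun x => by simp only [bump]; ring
    simp only [h]
    rw [integral_sub hi e, integral_indicator measurableSet_Ioo,
      Measure.restrict_restrict measurableSet_Ioo, inter_eq_left.2 hsub]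
    simp only [integral_const, MeasurableSet.univ, measureReal_restrict_apply, univ_inter,
      Real.volume_real_Ioo_of_le hab.le, smul_eq_mul]
    ring
  rw [Mfun, this, Mfun]; ring

/-- The initial datum of (H2) is admissible, and `𝐌(ρ⁰)` is a convergent integral. -/
lemma H2.memAdm {β θ X0 ρmin ρmax : ℝ} {ρ0 ρ0' : ℝ → ℝ} (h : H2 β θ X0 ρmin ρmax ρ0 ρ0') :
    MemAdm ρ0 ∧ IntegrableOn (fun x => 1 - ρ0 x) (Ioi 0) := by
  obtain ⟨hX0, hpos, hd, -, h1, -⟩ := h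
  have hc : ContinuousOn ρ0 (Icc 0 X0) := fun x hx => (hd x hx).continuousWithinAt
  have hi : IntegrableOn (fun x => 1 - ρ0 x) (Ioi 0) := by
    refine integrableOn_Ioi_of_contOn hX0.le (continuousOn_const.sub hc)
      (ae_of_all _ fun x _ => rfl) (ae_of_all _ fun x hx => ?_)
    rw [h1 x hx, sub_self]
  refine ⟨⟨ae_of_all _ fun x _ => (hpos x).le, ?_, ?_, X0, hX0, ae_of_all _ h1⟩, hi⟩
  · have h := (locallyIntegrable_const (μ := (volume : Measure ℝ)) (1:ℝ)).locallyIntegrableOn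
      (Ioi 0)
    refine (h.sub hi.locallyIntegrableOn).congr ?_
    exact ae_of_all _ fun x => by simp
  · refine IntegrableOn.locallyIntegrableOn (integrableOn_Ioi_of_contOn hX0.le
      (Real.continuous_mul_log.comp_continuousOn hc)
      (ae_of_all _ fun x _ => rfl) (ae_of_all _ fun x hx => ?_))
    simp [h1 x hx]

/-! ### The comparison argument -/

lemma ptau_antitone {Kτ mτ m m' : ℝ} (hK : 0 ≤ Kτ) (h : m ≤ m') :
    ptau Kτ mτ m' ≤ ptau Kτ mτ m := by
  unfold ptau
  have : max (-m' - mτ) 0 ≤ max (-m - mτ) 0 := max_le_max_right _ (by linarith)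
  have h0 : 0 ≤ max (-m' - mτ) 0 := le_max_right _ _
  gcongr

/-- Near a point where a continuous function on `[0,X]` is nonpositive there are arbitrarily
short intervals on which it stays below `κ`. -/
lemma exists_Ioo_lt {X κ δ0 x0 : ℝ} {g : ℝ → ℝ} (hX : 0 < X) (hg : ContinuousOn g (Icc 0 X))
    (hx0 : x0 ∈ Icc 0 X) (h0 : g x0 ≤ 0) (hκ : 0 < κ) (hδ0 : 0 < δ0) :
    ∃ a b, 0 ≤ a ∧ a < b ∧ b ≤ X ∧ b - a ≤ δ0 ∧ ∀ x ∈ Ioo a b, g x ≤ κ := by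
  obtain ⟨δ, hδ, h⟩ := Metric.continuousWithinAt_iff.1 (hg x0 hx0) κ hκ
  have key : ∀ x ∈ Icc 0 X, |x - x0| < δ → g x ≤ κ := by
    intro x hx hd
    have := (abs_lt.1 (Real.dist_eq _ _ ▸ h hx (by rwa [Real.dist_eq]))).2
    linarith
  have hm : 0 < min δ δ0 := lt_min hδ hδ0
  rcases hx0.2.eq_or_lt with e | hlt
  · refine ⟨max 0 (X - min δ δ0), X, le_max_left _ _, max_lt hX (by linarith), le_rfl, ?_, ?_⟩
    · have := le_max_right 0 (X - min δ δ0)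
      linarith [min_le_right δ δ0]
    · intro x hx
      have h1 := max_lt_iff.1 hx.1
      refine key x ⟨h1.1.le, hx.2.le⟩ ?_
      rw [e, abs_lt]
      constructor <;> linarith [min_le_left δ δ0, hx.2, h1.2]
  · refine ⟨x0, min X (x0 + min δ δ0), hx0.1, lt_min hlt (by linarith), min_le_left _ _, ?_, ?_⟩
    · have := min_le_right X (x0 + min δ δ0)
      linarith [min_le_right δ δ0]
    · intro x hx
      have h1 := lt_min_iff.1 hx.2
      refine key x ⟨hx0.1.trans hx.1.le, h1.1.le⟩ ?_
      rw [abs_lt]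
      constructor <;> linarith [min_le_left δ δ0, hx.1, h1.2]

/-- Proposition 3.5, positivity. Let `(X, ρ)` be a minimizer of the
JKO functional with `X ≥ X⁰`. Then the continuous representative `ρ̄` of `ρ` on
`[0,X]` satisfies `ρ̄(x) > 0` for every `x ∈ [0,X]`, and `ln ρ ∈ L¹(ℝ₊)`. -/
theorem minimizer_positivity_and_log_integrable
    (lam α β θ T X0 ρmin ρmax τ mτ Kτ : ℝ) (ρ0 ρ0' : ℝ → ℝ)
    (hlam : 0 < lam) (hα : 0 < α) (hθ : 0 < θ) (hβθ : β + θ < 1) (hT : 0 < T)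
    (hH2 : H2 β θ X0 ρmin ρmax ρ0 ρ0')
    (hτ0 : 0 < τ) (hτ1 : τ < 1) (hmτ : 0 < mτ) (hKτ : 0 < Kτ)
    (X : ℝ) (ρ ρb : ℝ → ℝ)
    (hmin : IsJKOMin lam α β θ τ Kτ mτ X0 ρ0 X ρ) (hXX0 : X0 ≤ X)
    (hrep : ContRep X ρ ρb) :
    (∀ x ∈ Icc 0 X, 0 < ρb x) ∧
    IntegrableOn (fun x => Real.log (ρ x)) (Ioi 0) volume := by
  obtain ⟨⟨hadm, hxX⟩, hJ⟩ := hmin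
  obtain ⟨hcb, hae⟩ := hrep
  obtain ⟨hadm0, hi0⟩ := hH2.memAdm
  have hX : 0 < X := hH2.1.trans_le hXX0
  have h1X := ae_eq_one_of_xA_le hadm hxX
  have hi : IntegrableOn (fun x => 1 - ρ x) (Ioi 0) := by
    refine integrableOn_Ioi_of_contOn hX.le (continuousOn_const (c := (1:ℝ)) |>.sub hcb)
      (hae.mono fun x hx hm => ?_) (h1X.mono fun x hx hm => ?_)
    · rw [hx hm]; rfl
    · rw [hx hm, sub_self]
  have hf : IntegrableOn (fun x => fEnt β (ρ x)) (Ioi 0) := by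
    have hcf : Continuous (fEnt β) := by
      have : fEnt β = fun r => r * Real.log r - r * β + β := by
        funext r; unfold fEnt; ring
      rw [this]
      exact (Real.continuous_mul_log.sub (continuous_id.mul continuous_const)).add
        continuous_const
    refine integrableOn_Ioi_of_contOn hX.le (hcf.comp_continuousOn hcb)
      (hae.mono fun x hx hm => ?_) (h1X.mono fun x hx hm => ?_)
    · rw [hx hm]; rfl
    · rw [hx hm]; simp [fEnt]
  have hpos : ∀ x ∈ Icc 0 X, 0 < ρb x := by
    intro x0 hx0
    by_contra! hle
    set Λ := max (xA ρ) (xA ρ0) with hΛ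
    set C := Λ^2 / (2 * τ) + 1 - β + θ with hC
    -- `κ` is chosen so that `ln (2κ) + C < 0`: the entropy gain dominates all other costs.
    set κ := Real.exp (-(|C| + 1)) / 2 with hκd
    have hκ : 0 < κ := by positivity
    have hlog : Real.log (2 * κ) = -(|C| + 1) := by
      rw [hκd, mul_div_cancel₀ _ two_ne_zero, Real.log_exp]
    have hκ1 : 2 * κ < 1 := by
      rw [hκd, mul_div_cancel₀ _ two_ne_zero, Real.exp_lt_one_iff]
      linarith [abs_nonneg C]
    set M := Mdiff ρ ρ0 with hM
    obtain ⟨δ0, hδ0, hδM⟩ : ∃ δ0 : ℝ, 0 < δ0 ∧ (M < 0 → κ * δ0 ≤ -M) := by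
      by_cases h : M < 0
      · refine ⟨-M / κ, div_pos (by linarith) hκ, fun _ => ?_⟩
        rw [mul_div_cancel₀ _ hκ.ne']
      · exact ⟨1, one_pos, fun h' => absurd h' h⟩
    obtain ⟨a, b, ha, hab, hbX, hbδ, hsmall⟩ := exists_Ioo_lt hX hcb hx0 hle hκ hδ0
    have hsm : ∀ᵐ x : ℝ, x ∈ Ioo a b → ρ x ≤ κ := by
      filter_upwards [hae] with x hx hm
      rw [hx ⟨ha.trans_lt hm.1, hm.2.trans_le hbX⟩]
      exact hsmall x hm
    obtain ⟨hxA, hbxA⟩ := xA_bump hadm hab hκ hκ1 hsm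
    obtain ⟨hσ, hE⟩ := bump_adm (β := β) hadm ha hab hκ hκ1 hsm hf
    have hMb : Mdiff (bump ρ κ a b) ρ0 = M + κ * (b - a) := by
      rw [hM, Mdiff, Mfun_bump hi ha hab, Mdiff]; ring
    have hm : 0 < κ * (b - a) := mul_pos hκ (sub_pos.2 hab)
    have hW := W2sq_bump hΛ hadm.1 hadm0.1 hi
      (ae_eq_one_of_xA_le hadm (le_max_left _ _)) hi0
      (ae_eq_one_of_xA_le hadm0 (le_max_right _ _)) hκ hab
      (Ioo_subset_Ioo ha (hbxA.trans (le_max_left _ _))) hxA hMb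
      (fun h => (mul_le_mul_of_nonneg_left hbδ hκ.le).trans (hδM h))
    have hmin := hJ X (bump ρ κ a b) ⟨hσ, hxA.trans_le hxX⟩
    unfold Jfun dsq Efun at hmin
    rw [hMb, ← hM] at hmin
    have hp := ptau_antitone (mτ := mτ) hKτ.le (le_add_of_nonneg_right hm.le : M ≤ M + κ * (b - a))
    have habs : θ * |M + κ * (b - a)| ≤ θ * |M| + θ * (κ * (b - a)) := by
      have := abs_add_le M (κ * (b - a))
      rw [abs_of_pos hm] at this
      nlinarith
    have hWd : (W2sq (bump ρ κ a b) ρ0 + lam * (X - X0)^2) / (2 * τ)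
        ≤ (W2sq ρ ρ0 + lam * (X - X0)^2) / (2 * τ) + κ * (b - a) * (Λ^2 / (2 * τ)) := by
      rw [← mul_div_assoc, ← add_div]
      exact div_le_div_of_nonneg_right (by linarith) (by linarith)
    have hneg : κ * (b - a) * (Real.log (2 * κ) + C) < 0 :=
      mul_neg_of_pos_of_neg hm (by rw [hlog]; linarith [le_abs_self C])
    have hexp : κ * (b - a) * (Real.log (2 * κ) + C) = κ * (b - a) * (Real.log (2 * κ) + 1 - β)
        + κ * (b - a) * (Λ^2 / (2 * τ)) + θ * (κ * (b - a)) := by rw [hC]; ring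
    linarith
  refine ⟨hpos, integrableOn_Ioi_of_contOn hX.le
    (hcb.log fun x hx => (hpos x hx).ne')
    (hae.mono fun x hx hm => ?_) (h1X.mono fun x hx hm => ?_)⟩
  · rw [hx hm]
  · rw [hx hm, Real.log_one]

end
end

section
/- Assume λ, α, θ > 0, β + θ < 1, (H2), m_τ, K_τ > 0 and 0 < τ < 1. Let (X, ρ) be a minimizer of J_{(X⁰,ρ⁰)} over 𝒜 with X ≥ X⁰, with transport structure map T, and let ρ̄ be the continuous representative of ρ on [0,X]. Then there exist a constant C ∈ ℝ and a Lipschitz function Ψ : [0,X] → ℝ with Ψ'(x) = x − T(x) for a.e. x ∈ (0,X), such that Ψ(x)/τ + ln ρ̄(x) = C for every x ∈ [0,X]; consequently ρ̄(x) = exp(C − Ψ(x)/τ) for every x ∈ [0,X], and ρ̄ is Lipschitz continuous on [0,X]. -/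
/-!
The Euler-Lagrange equation of the minimization problem is obtained from inner variations.
For `ξ` with `ξ(0) = ξ(X) = 0` and small `ε`, the diffeomorphism `S(x) = x + ε ξ(x)` of `[0,X]`
pushes `ρ` to a competitor `σ` (`exists_pushforward`) of the same total mass, so that the terms
`θ|M|`, `αX`, `λ(X - X⁰)²` and the penalty do not change. The coupling `(S, T)_# ρ` (together with
the mass at the origin) bounds the new transport cost by `∫ (S - T)² ρ` (`W2sq_perturb`), and the
entropy changes by `-∫ ρ ln S'`. Both signs of `ε` are allowed, so `euler_lagrange` yields
`∫ ((x - T) ρ ξ / τ - ρ ξ') = 0`. The cut-off `Λ` in the distance is `max(x_σ, x_{ρ⁰})`; it equals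
`X` because the trace of `σ` at `X` differs from `1` for all small `ε ≠ 0` as soon as `ξ'(X) ≠ 0`,
which is why the test functions are restricted to these.

An integration by parts and the du Bois-Reymond lemma `eq_const_of_orthogonal` give
`ρ̄(x) + ∫₀ˣ (s - T) ρ̄ / τ ds = c` on `[0,X]`. This shows that `ρ̄` is Lipschitz, and it is the linear
ODE `ρ̄' = -Ψ' ρ̄ / τ` with `Ψ(x) = ∫₀ˣ (s - T(s)) ds`, valid at all continuity points of the monotone
map `T`, hence off a countable set. Therefore `ρ̄ = ρ̄(0) exp(-Ψ/τ)`.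

It remains to see `ρ̄(0) > 0`, as otherwise `ρ̄` vanishes identically. That is excluded by
`not_ae_zero`: replacing the zero density by a small constant `δ` changes the entropy by
`X δ (ln δ - β) < 0` without increasing any other term.
-/

open MeasureTheory Real Set ENNReal Filter Topology

noncomputable section

/-! ### Measures with a density on an interval -/

/-- The measure `ρ · Leb⌊(a,b)`. -/
def dens (ρ : ℝ → ℝ) (a b : ℝ) : Measure ℝ :=
  (volume.restrict (Ioo a b)).withDensity (fun x => ENNReal.ofReal (ρ x))

lemma dens_eq (ρ : ℝ → ℝ) (a b : ℝ) :
    (volume.withDensity (fun x => ENNReal.ofReal (ρ x))).restrict (Ioo a b) = dens ρ a b := by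
  rw [dens, restrict_withDensity measurableSet_Ioo]

lemma dens_congr {ρ r : ℝ → ℝ} {a b : ℝ} (h : ∀ᵐ x : ℝ, x ∈ Ioo a b → ρ x = r x) :
    dens ρ a b = dens r a b := by
  refine withDensity_congr_ae ?_
  filter_upwards [(ae_restrict_iff' measurableSet_Ioo).2 h] with x hx
  rw [hx]

lemma dens_univ {r : ℝ → ℝ} {a b : ℝ} (h0 : ∀ x ∈ Ioo a b, 0 ≤ r x)
    (hi : IntegrableOn r (Ioo a b)) :
    dens r a b univ = ENNReal.ofReal (∫ x in Ioo a b, r x) := by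
  rw [dens, withDensity_apply _ MeasurableSet.univ, Measure.restrict_univ,
    ofReal_integral_eq_lintegral_ofReal hi]
  exact (ae_restrict_iff' measurableSet_Ioo).2 (ae_of_all _ h0)

lemma dens_finite {r : ℝ → ℝ} {a b : ℝ} (hi : IntegrableOn r (Ioo a b)) :
    IsFiniteMeasure (dens r a b) :=
  isFiniteMeasure_withDensity_ofReal hi.2

lemma integral_dens {r : ℝ → ℝ} {a b : ℝ} (h0 : ∀ x ∈ Ioo a b, 0 ≤ r x)
    (hi : IntegrableOn r (Ioo a b)) (φ : ℝ → ℝ) :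
    ∫ x, φ x ∂(dens r a b) = ∫ x in Ioo a b, φ x * r x := by
  rw [dens, integral_withDensity_eq_integral_toReal_smul₀ hi.1.aemeasurable.ennreal_ofReal
    (ae_of_all _ fun _ => ENNReal.ofReal_lt_top)]
  refine setIntegral_congr_fun measurableSet_Ioo fun x hx => ?_
  simp [ENNReal.toReal_ofReal (h0 x hx), mul_comm]

lemma dens_ae {r : ℝ → ℝ} {a b : ℝ} : ∀ᵐ x ∂(dens r a b), x ∈ Ioo a b :=
  (withDensity_absolutelyContinuous _ _).ae_le (ae_restrict_mem measurableSet_Ioo)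

/-- Cutting an interval at an interior point: the point itself carries no mass. -/
lemma dens_split (r : ℝ → ℝ) {a b c : ℝ} (hab : a ≤ b) (hbc : b ≤ c) :
    dens r a c = dens r a b + dens r b c := by
  have : volume.restrict (Ioo a c) = volume.restrict (Ioo a b) + volume.restrict (Ioo b c) := by
    rw [← Measure.restrict_union (Set.disjoint_left.2 fun x hx hx' => by
      exact lt_asymm hx.2 hx'.1) measurableSet_Ioo]
    refine Measure.restrict_congr_set (Ioo_ae_eq_Ioc.trans ?_)
    rw [← Ioc_union_Ioc_eq_Ioc hab hbc]
    exact Filter.EventuallyEq.union Ioo_ae_eq_Ioc.symm Ioo_ae_eq_Ioc.symm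
  rw [dens, this, withDensity_add_measure]; rfl

lemma map_dens_const {r f : ℝ → ℝ} {a b c : ℝ} (h0 : ∀ x ∈ Ioo a b, 0 ≤ r x)
    (hi : IntegrableOn r (Ioo a b)) (hf : ∀ x ∈ Ioo a b, f x = c) :
    (dens r a b).map f = ENNReal.ofReal (∫ x in Ioo a b, r x) • Measure.dirac c := by
  rw [Measure.map_congr (g := fun _ => c) (by
    filter_upwards [dens_ae] with x hx using hf x hx), Measure.map_const, dens_univ h0 hi]

/-- The mass-transport form of the change of variables: if `S` maps `(0,X)` onto itself
with derivative `S' > 0` and `σ(S x) S'(x) = r(x)`, then `S` pushes `r` to `σ`. -/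
lemma map_dens_of_cov {X : ℝ} {S S' r σ : ℝ → ℝ} (hS : Measurable S)
    (hd : ∀ x, HasDerivAt S (S' x) x) (hpos : ∀ x, 0 < S' x) (hinj : Function.Injective S)
    (him : S '' Ioo 0 X = Ioo 0 X) (hσ : ∀ x ∈ Ioo 0 X, σ (S x) * S' x = r x) :
    (dens r 0 X).map S = dens σ 0 X := by
  ext A hA
  rw [Measure.map_apply hS hA, dens, dens, withDensity_apply _ (hS hA), withDensity_apply _ hA,
    Measure.restrict_restrict (hS hA), Measure.restrict_restrict hA]
  have h1 : A ∩ Ioo 0 X = S '' (S ⁻¹' A ∩ Ioo 0 X) := by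
    rw [image_preimage_inter, him]
  rw [h1, lintegral_image_eq_lintegral_abs_deriv_mul ((hS hA).inter measurableSet_Ioo)
    (fun x _ => (hd x).hasDerivWithinAt) hinj.injOn]
  refine setLIntegral_congr_fun ((hS hA).inter measurableSet_Ioo) fun x hx => ?_
  rw [abs_of_pos (hpos x), ← ENNReal.ofReal_mul (hpos x).le, ← hσ x hx.2, mul_comm]

lemma integral_of_cov {X : ℝ} {S S' : ℝ → ℝ}
    (hd : ∀ x, HasDerivAt S (S' x) x) (hpos : ∀ x, 0 < S' x) (hinj : Function.Injective S)
    (him : S '' Ioo 0 X = Ioo 0 X) (F : ℝ → ℝ) :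
    ∫ y in Ioo 0 X, F y = ∫ x in Ioo 0 X, S' x * F (S x) := by
  conv_lhs => rw [← him]
  rw [integral_image_eq_integral_abs_deriv_smul measurableSet_Ioo
    (fun x _ => (hd x).hasDerivWithinAt) hinj.injOn]
  refine setIntegral_congr_fun measurableSet_Ioo fun x hx => ?_
  simp [abs_of_pos (hpos x)]

/-! ### Elementary facts on `𝐖₂²`, `x_ρ`, `𝐌` and the entropy -/

/-- Every coupling bounds `𝐖₂²` from above; the set of costs is bounded below by `0`, so the real
infimum is genuine. -/
lemma W2sq_le {ρ ρt : ℝ → ℝ} (γ : Measure (ℝ × ℝ)) (h1 : γ.map Prod.fst = nuMeas ρ ρt)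
    (h2 : γ.map Prod.snd = nuMeas ρt ρ) : W2sq ρ ρt ≤ ∫ p, (p.1 - p.2)^2 ∂γ := by
  refine csInf_le ⟨0, ?_⟩ ⟨γ, h1, h2, rfl⟩
  rintro r ⟨γ, -, -, rfl⟩
  exact integral_nonneg fun p => sq_nonneg _

lemma xA_le {ρ : ℝ → ℝ} {X : ℝ} (hX : 0 < X) (h : ∀ᵐ y : ℝ, y ∈ Ioi X → ρ y = 1) : xA ρ ≤ X :=
  by
  unfold xA
  refine csInf_le ⟨0, ?_⟩ ⟨hX, h⟩
  rintro _ ⟨hx, -⟩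
  exact hx.le

/-- The infimum defining `x_ρ` is attained in the a.e. sense. -/
lemma ae_one_of_xA_le {ρ : ℝ → ℝ} {X : ℝ} (hρ : MemAdm ρ) (h : xA ρ ≤ X) :
    ∀ᵐ y : ℝ, y ∈ Ioi X → ρ y = 1 := by
  obtain ⟨-, -, -, x0, hx0, hx0'⟩ := hρ
  have key : ∀ n : ℕ, ∀ᵐ y : ℝ, y ∈ Ioi (X + 1 / ((n : ℝ) + 1)) → ρ y = 1 := by
    intro n
    have hlt : xA ρ < X + 1 / ((n : ℝ) + 1) := by
      have : (0 : ℝ) < 1 / ((n : ℝ) + 1) := by positivity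
      linarith
    have hne : {x : ℝ | 0 < x ∧ ∀ᵐ y : ℝ, y ∈ Ioi x → ρ y = 1}.Nonempty := ⟨x0, hx0, hx0'⟩
    obtain ⟨x, ⟨_, hx⟩, hxl⟩ := exists_lt_of_csInf_lt hne hlt
    filter_upwards [hx] with y hy hyX
    exact hy (hxl.trans hyX)
  filter_upwards [ae_all_iff.2 key] with y hy hyX
  obtain ⟨n, hn⟩ := exists_nat_one_div_lt (sub_pos.2 (mem_Ioi.1 hyX))
  exact hy n (by simp only [mem_Ioi]; linarith)

/-- A density with a limit other than `1` at `X⁻` satisfies `X ≤ x_σ`. -/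
lemma le_xA_of_tendsto {σ : ℝ → ℝ} {X L : ℝ} (hX : 0 < X)
    (h1 : ∀ᵐ y : ℝ, y ∈ Ioi X → σ y = 1)
    (hL : Tendsto σ (𝓝[<] X) (𝓝 L)) (hne : L ≠ 1) : X ≤ xA σ := by
  unfold xA
  refine le_csInf ⟨X, hX, h1⟩ ?_
  rintro x ⟨_, hx⟩
  by_contra hlt
  push Not at hlt
  have hev : ∀ᶠ y in 𝓝[<] X, σ y ≠ 1 := hL.eventually_ne hne
  obtain ⟨c, hc, hcX⟩ := (mem_nhdsLT_iff_exists_Ioo_subset).1 hev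
  have hm : max c x < X := max_lt hc hlt
  have hpos : 0 < volume (Ioo (max c x) X) := by
    rw [Real.volume_Ioo]; simpa using hm
  have : volume (Ioo (max c x) X) = 0 := by
    refine measure_mono_null ?_ hx
    intro y hy hyx
    have hy1 : c < y := (le_max_left _ _).trans_lt hy.1
    have hy2 : x < y := (le_max_right _ _).trans_lt hy.1
    exact hcX ⟨hy1, hy.2⟩ (hyx hy2)
  exact hpos.ne' this

lemma integral_Ioi_eq {φ : ℝ → ℝ} {X : ℝ}
    (h : ∀ᵐ y : ℝ, y ∈ Ioi X → φ y = 0) :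
    ∫ x in Ioi (0:ℝ), φ x = ∫ x in Ioo 0 X, φ x := by
  refine setIntegral_eq_of_subset_of_ae_sdiff_eq_zero measurableSet_Ioi.nullMeasurableSet
    Ioo_subset_Ioi_self ?_
  have hX : ∀ᵐ y : ℝ, y ≠ X := by simp [ae_iff, measure_singleton]
  filter_upwards [h, hX] with y hy hyX hy'
  refine hy (lt_of_le_of_ne (not_lt.1 fun hlt => hy'.2 ⟨hy'.1, hlt⟩) hyX.symm)

lemma Mfun_eq {ρ : ℝ → ℝ} {X : ℝ} (hX : 0 < X) (h1 : ∀ᵐ y : ℝ, y ∈ Ioi X → ρ y = 1)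
    (hi : IntegrableOn ρ (Ioo 0 X)) : Mfun ρ = (∫ x in Ioo 0 X, ρ x) - X := by
  rw [Mfun, integral_Ioi_eq (X := X) (by filter_upwards [h1] with y hy hyX; simp [hy hyX]),
    integral_sub (by simp) hi]
  simp [hX.le]

lemma fEnt_one (β : ℝ) : fEnt β 1 = 0 := by simp [fEnt]

lemma integral_fEnt_eq {ρ : ℝ → ℝ} {X : ℝ} (β : ℝ) (h1 : ∀ᵐ y : ℝ, y ∈ Ioi X → ρ y = 1) :
    ∫ x in Ioi (0:ℝ), fEnt β (ρ x) = ∫ x in Ioo 0 X, fEnt β (ρ x) :=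
  integral_Ioi_eq (by filter_upwards [h1] with y hy hyX; rw [hy hyX, fEnt_one])

lemma memAdm_of_bdd {σ : ℝ → ℝ} {X B : ℝ} (hX : 0 < X) (hm : Measurable σ) (h0 : ∀ y, 0 ≤ σ y)
    (hB : ∀ y, σ y ≤ B) (h1 : ∀ y, X < y → σ y = 1) : MemAdm σ := by
  have key : ∀ (f : ℝ → ℝ) (C : ℝ), Measurable f → (∀ y, |f y| ≤ C) →
      LocallyIntegrableOn f (Ioi 0) volume := by
    intro f C hf hC
    refine LocallyIntegrable.locallyIntegrableOn ?_ _
    intro x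
    refine ⟨Icc (x-1) (x+1), Icc_mem_nhds (by linarith) (by linarith), ?_⟩
    exact Measure.integrableOn_of_bounded (M := C) (by simp) hf.aestronglyMeasurable
      (ae_of_all _ hC)
  refine ⟨ae_of_all _ fun x _ => h0 x, key σ B hm fun y => by rw [abs_of_nonneg (h0 y)]; exact hB y,
    ?_, X, hX, ae_of_all _ h1⟩
  obtain ⟨C, hC⟩ := (isCompact_Icc (a := 0) (b := B)).exists_bound_of_continuousOn
    Real.continuous_mul_log.continuousOn
  exact key _ C (hm.mul hm.log) fun y => hC _ ⟨h0 y, hB y⟩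

/-! ### Inner variations -/

/-- The perturbed density: for the diffeomorphism `S x = x + ε ξ(x)` of `[0,X]`, the density `σ`
with `σ(S x) S'(x) = r(x)`, continued by `1` beyond `X`. -/
lemma exists_pushforward {X B G ε : ℝ} {r g ξ : ℝ → ℝ} (hr : Continuous r)
    (hr0 : ∀ x, 0 ≤ r x) (hrB : ∀ x, r x ≤ B) (hg : Continuous g)
    (hgG : ∀ x, |g x| ≤ G) (hξ : ∀ x, HasDerivAt ξ (g x) x) (hξ0 : ξ 0 = 0) (hξX : ξ X = 0)
    (hε : |ε| * G ≤ 1 / 2) :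
    (Function.Injective fun x => x + ε * ξ x) ∧
    (fun x => x + ε * ξ x) '' Ioo 0 X = Ioo 0 X ∧
    ∃ σ : ℝ → ℝ, Measurable σ ∧ (∀ y, 0 ≤ σ y) ∧ (∀ y, σ y ≤ max (2 * B) 1) ∧
      (∀ y, X ≤ y → σ y = 1) ∧
      (∀ x ∈ Ioo 0 X, σ (x + ε * ξ x) * (1 + ε * g x) = r x) ∧
      Tendsto σ (𝓝[<] X) (𝓝 (r X / (1 + ε * g X))) := by
  have hεg : ∀ x, |ε * g x| ≤ 1 / 2 := fun x => by
    rw [abs_mul]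
    exact (mul_le_mul_of_nonneg_left (hgG x) (abs_nonneg _)).trans hε
  have hpos : ∀ x, 1 / 2 ≤ 1 + ε * g x := fun x => by
    have := (abs_le.1 (hεg x)).1; linarith
  set S : ℝ → ℝ := fun x => x + ε * ξ x with hSdef
  have hd : ∀ x, HasDerivAt S (1 + ε * g x) x := fun x =>
    (hasDerivAt_id x).add ((hξ x).const_mul ε)
  have hSc : Continuous S := continuous_iff_continuousAt.2 fun x => (hd x).continuousAt
  have hmono : StrictMono S := strictMono_of_deriv_pos fun x => by
    rw [(hd x).deriv]; linarith [hpos x]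
  have hS0 : S 0 = 0 := by simp [hSdef, hξ0]
  have hSX : S X = X := by simp [hSdef, hξX]
  -- `S x - x/2` is nondecreasing, so `S` is proper and hence onto
  have hd2 : ∀ x, HasDerivAt (fun x => S x - x / 2) (1 + ε * g x - 1 / 2) x := fun x =>
    (hd x).sub ((hasDerivAt_id x).div_const 2)
  have hmono2 : Monotone fun x => S x - x / 2 :=
    monotone_of_deriv_nonneg (fun x => (hd2 x).differentiableAt) fun x => by
      rw [(hd2 x).deriv]; linarith [hpos x]
  have htop : Tendsto S atTop atTop := by
    refine tendsto_atTop_mono' _ ?_ (tendsto_id.atTop_div_const (two_pos : (0:ℝ) < 2))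
    filter_upwards [eventually_ge_atTop 0] with x hx
    have := hmono2 hx
    simp only [hS0] at this
    simp only [id]; linarith
  have hbot : Tendsto S atBot atBot := by
    refine tendsto_atBot_mono' _ ?_ (tendsto_id.atBot_div_const (two_pos : (0:ℝ) < 2))
    filter_upwards [eventually_le_atBot 0] with x hx
    have := hmono2 hx
    simp only [hS0] at this
    simp only [id]; linarith
  have hsurj : Function.Surjective S := hSc.surjective htop hbot
  set e := hmono.orderIsoOfSurjective S hsurj with he
  have heS : ∀ x, e x = S x := fun x => rfl
  have hRS : ∀ x, e.symm (S x) = x := fun x => by rw [← heS]; simp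
  have hSR : ∀ x, S (e.symm x) = x := fun x => by rw [← heS]; simp
  have hRc : Continuous e.symm := e.symm.continuous
  have hFc : Continuous fun y => r (e.symm y) / (1 + ε * g (e.symm y)) := by
    refine (hr.comp hRc).div (continuous_const.add (continuous_const.mul (hg.comp hRc))) fun y => ?_
    linarith [hpos (e.symm y)]
  refine ⟨hmono.injective, ?_, ?_⟩
  · ext y
    constructor
    · rintro ⟨x, hx, rfl⟩
      exact ⟨by rw [← hS0]; exact hmono hx.1, by
        calc S x < S X := hmono hx.2
          _ = X := hSX⟩
    · intro hy
      refine ⟨e.symm y, ⟨?_, ?_⟩, hSR y⟩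
      · rw [← hmono.lt_iff_lt, hS0, hSR]; exact hy.1
      · rw [← hmono.lt_iff_lt, hSX, hSR]; exact hy.2
  · refine ⟨fun y => if y < X then r (e.symm y) / (1 + ε * g (e.symm y)) else 1,
      Measurable.ite measurableSet_Iio hFc.measurable measurable_const, ?_, ?_, ?_, ?_, ?_⟩
    · intro y
      simp only
      split_ifs
      · exact div_nonneg (hr0 _) (by linarith [hpos (e.symm y)])
      · exact zero_le_one
    · intro y
      simp only
      split_ifs
      · refine le_max_of_le_left ?_
        rw [div_le_iff₀ (by linarith [hpos (e.symm y)])]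
        have h1 := hpos (e.symm y)
        have h2 := hrB (e.symm y)
        have h3 := hr0 (e.symm y)
        nlinarith
      · exact le_max_right _ _
    · intro y hy
      simp [not_lt.2 hy]
    · intro x hx
      have hlt : S x < X := by
        calc S x < S X := hmono hx.2
          _ = X := hSX
      have : x + ε * ξ x = S x := rfl
      rw [this]
      simp only [if_pos hlt, hRS]
      rw [div_mul_cancel₀]
      linarith [hpos x]
    · have h1 : Tendsto (fun y => r (e.symm y) / (1 + ε * g (e.symm y))) (𝓝[<] X)
          (𝓝 (r X / (1 + ε * g X))) := by
        have := (hFc.tendsto X).mono_left (nhdsWithin_le_nhds (s := Iio X))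
        have hX : e.symm X = X := by conv_lhs => rw [← hSX]; exact hRS X
        rwa [hX] at this
      refine h1.congr' ?_
      filter_upwards [self_mem_nhdsWithin] with y hy
      simp only [if_pos (mem_Iio.1 hy)]

/-- The measure `ν(ρ,ρ̃)` when the cut-off `Λ` equals `X`. -/
lemma nuMeas_eq {ρ ρt : ℝ → ℝ} {X : ℝ} (h : max (xA ρ) (xA ρt) = X) :
    nuMeas ρ ρt = dens ρ 0 X + ENNReal.ofReal (Mdiff ρt ρ) • Measure.dirac 0 := by
  rw [nuMeas, h, dens_eq]

lemma Mdiff_symm (ρ ρt : ℝ → ℝ) : Mdiff ρt ρ = - Mdiff ρ ρt := by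
  unfold Mdiff; ring

/-- Transporting the perturbed density `σ` to `ρ⁰` by composing the perturbation `S` with `T`:
an upper bound for the change of the transport cost. -/
lemma W2sq_perturb {X B ℓ : ℝ} {ρ0 ρ r σ S T : ℝ → ℝ} (hX : 0 < X)
    (hρ0 : ∀ x, 0 < ρ0 x) (hρ0i : IntegrableOn ρ0 (Ioo 0 X)) (hx0 : xA ρ0 ≤ X)
    (hr : Continuous r) (hr0 : ∀ x, 0 ≤ r x) (hrB : ∀ x, r x ≤ B)
    (hρr : ∀ᵐ x : ℝ, x ∈ Ioo 0 X → ρ x = r x)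
    (hT : TransportStruct ρ0 ρ X T ℓ)
    (hSm : Measurable S) (hSX : ∀ x ∈ Ioo 0 X, S x ∈ Ioo 0 X)
    (hSd : (dens r 0 X).map S = dens σ 0 X) (hσX : xA σ = X)
    (hM : Mdiff σ ρ0 = Mdiff ρ ρ0) :
    W2sq σ ρ0 - W2sq ρ ρ0 ≤
      ∫ x in Ioo 0 X, ((S x - T x)^2 * r x - (x - T x)^2 * r x) := by
  have hri : ∀ a b, IntegrableOn r (Ioo a b) := fun a b =>
    (hr.integrableOn_Icc (a := a) (b := b)).mono_set Ioo_subset_Icc_self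
  have hΛ1 : max (xA σ) (xA ρ0) = X := by rw [hσX, max_eq_left hx0]
  have hΛ2 : max (xA ρ0) (xA σ) = X := by rw [max_comm, hΛ1]
  have hρ0i' : ∀ a b, 0 ≤ a → b ≤ X → IntegrableOn ρ0 (Ioo a b) := fun a b ha hb =>
    hρ0i.mono_set (Ioo_subset_Ioo ha hb)
  have hfin := dens_finite (hri 0 X)
  have hintg : ∀ {f : ℝ → ℝ}, Measurable f → (∀ x ∈ Ioo 0 X, f x ∈ Icc 0 X) → Measurable T →
      (∀ x ∈ Icc 0 X, T x ∈ Icc 0 X) → IntegrableOn (fun x => (f x - T x)^2 * r x) (Ioo 0 X) := by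
    intro f hf hfX hTm hTX
    refine Measure.integrableOn_of_bounded (M := X^2 * B) (by simp)
      (((hf.sub hTm).pow_const 2).mul hr.measurable).aestronglyMeasurable ?_
    refine (ae_restrict_iff' measurableSet_Ioo).2 (ae_of_all _ fun x hx => ?_)
    have h1 := hfX x hx
    have h2 := hTX x (Ioo_subset_Icc_self hx)
    rw [Real.norm_eq_abs, abs_of_nonneg (mul_nonneg (sq_nonneg _) (hr0 x))]
    refine mul_le_mul ?_ (hrB x) (hr0 x) (sq_nonneg _)
    rw [sq_le_sq, abs_of_pos hX]
    exact abs_le.2 ⟨by linarith [h1.1, h2.2], by linarith [h1.2, h2.1]⟩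
  -- the cost of the coupling `(S, T)_# r`
  have hcost : ∀ {f : ℝ → ℝ}, Measurable f → Measurable T →
      ∫ p, (p.1 - p.2)^2 ∂((dens r 0 X).map fun x => (f x, T x)) =
        ∫ x in Ioo 0 X, (f x - T x)^2 * r x := by
    intro f hf hTm
    rw [integral_map (hf.prodMk hTm).aemeasurable (by fun_prop)]
    exact integral_dens (fun x _ => hr0 x) (hri 0 X) fun x => (f x - T x)^2
  have hold : ∀ {f : ℝ → ℝ}, ∫ x in (0:ℝ)..X, f x * ρ x = ∫ x in Ioo 0 X, f x * r x := by
    intro f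
    rw [intervalIntegral.integral_of_le hX.le, ← setIntegral_congr_set Ioo_ae_eq_Ioc]
    refine setIntegral_congr_ae measurableSet_Ioo ?_
    filter_upwards [hρr] with x hx hx'
    rw [hx hx']
  have hfst : ∀ {μ : Measure ℝ} {f : ℝ → ℝ} {h : ℝ → ℝ}, Measurable f → Measurable h →
      (μ.map fun x => (f x, h x)).map Prod.fst = μ.map f := by
    intro μ f h hf hh
    rw [Measure.map_map measurable_fst (hf.prodMk hh)]; rfl
  have hsnd : ∀ {μ : Measure ℝ} {f : ℝ → ℝ} {h : ℝ → ℝ}, Measurable f → Measurable h →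
      (μ.map fun x => (f x, h x)).map Prod.snd = μ.map h := by
    intro μ f h hf hh
    rw [Measure.map_map measurable_snd (hf.prodMk hh)]; rfl
  have hSX' : ∀ x ∈ Ioo 0 X, S x ∈ Icc 0 X := fun x hx => Ioo_subset_Icc_self (hSX x hx)
  have hidX : ∀ x ∈ Ioo 0 X, x ∈ Icc 0 X := fun x hx => Ioo_subset_Icc_self hx
  rcases hT with ⟨hM0, -, ℓp, hℓ, hTm, -, hTX, hT0, -, hpush, hMℓ, hW⟩ |
    ⟨hM0, hℓ, hTm, -, hTX, -, -, hpush, hMℓ, hW⟩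
  · -- otherwise the pushforward would be zero, whereas `ρ⁰` has positive mass
    have hℓX : ℓp ≤ X := by
      by_contra hlt
      push Not at hlt
      rw [Ioo_eq_empty (not_lt.2 hlt.le), Measure.restrict_empty, Measure.map_zero, dens_eq] at hpush
      have h1 := dens_univ (fun x _ => (hρ0 x).le) hρ0i
      rw [← hpush] at h1
      have h2 : 0 < ∫ x in Ioo 0 X, ρ0 x := by
        rw [setIntegral_pos_iff_support_of_nonneg_ae (ae_of_all _ fun x => (hρ0 x).le) hρ0i]
        have : Function.support ρ0 = univ := by
          ext x; simp [(hρ0 x).ne']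
        rw [this, univ_inter, Real.volume_Ioo]; simpa using hX
      have h3 := ENNReal.ofReal_pos.2 h2
      rw [← h1] at h3
      simp at h3
    have hρr' : ∀ {a b}, 0 ≤ a → b ≤ X → dens ρ a b = dens r a b := by
      intro a b ha hb
      refine dens_congr ?_
      filter_upwards [hρr] with x hx hx'
      exact hx ⟨ha.trans_lt hx'.1, hx'.2.trans_le hb⟩
    rw [dens_eq, dens_eq, hρr' hℓ le_rfl] at hpush
    have hMr : Mdiff ρ ρ0 = ∫ x in Ioo 0 ℓp, r x := by
      rw [hMℓ, intervalIntegral.integral_of_le hℓ, ← setIntegral_congr_set Ioo_ae_eq_Ioc]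
      refine setIntegral_congr_ae measurableSet_Ioo ?_
      filter_upwards [hρr] with x hx hx'
      exact hx ⟨hx'.1, hx'.2.trans_le hℓX⟩
    have hub := W2sq_le (ρ := σ) (ρt := ρ0) ((dens r 0 X).map fun x => (S x, T x)) (by
        rw [hfst hSm hTm, hSd, nuMeas_eq hΛ1, Mdiff_symm, hM, ENNReal.ofReal_of_nonpos (by linarith)]
        simp) (by
        rw [hsnd hSm hTm, nuMeas_eq hΛ2, hM, hMr, dens_split r hℓ hℓX, Measure.map_add _ _ hTm, hpush,
          map_dens_const (fun x _ => hr0 x) (hri _ _)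
            (fun x hx => hT0 x (Ioo_subset_Icc_self hx)), add_comm])
    rw [hcost hSm hTm] at hub
    rw [hW, hold, integral_sub (hintg hSm hSX' hTm hTX) (hintg measurable_id' hidX hTm hTX)]
    linarith
  · have hℓX : ℓ ≤ X := (hTX 0 ⟨le_rfl, hX.le⟩).1.trans (hTX 0 ⟨le_rfl, hX.le⟩).2
    have hTX' : ∀ x ∈ Icc 0 X, T x ∈ Icc 0 X := fun x hx =>
      ⟨hℓ.le.trans (hTX x hx).1, (hTX x hx).2⟩
    rw [dens_eq, dens_eq, dens_congr hρr] at hpush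
    have hMr : -Mdiff ρ ρ0 = ∫ x in Ioo 0 ℓ, ρ0 x := by
      rw [hMℓ, intervalIntegral.integral_of_le hℓ.le, ← setIntegral_congr_set Ioo_ae_eq_Ioc]
    have hfin0 := dens_finite (hρ0i' 0 ℓ le_rfl hℓX)
    have hm2 : Measurable fun y : ℝ => ((0:ℝ), y) := measurable_const.prodMk measurable_id
    -- the mass `ρ⁰⌊(0,ℓ)` still comes from the origin, which `S` fixes
    have hub := W2sq_le (ρ := σ) (ρt := ρ0) ((dens r 0 X).map (fun x => (S x, T x)) +
        (dens ρ0 0 ℓ).map fun y => (0, y)) (by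
        rw [Measure.map_add _ _ measurable_fst, hfst hSm hTm, hSd, nuMeas_eq hΛ1, Mdiff_symm, hM, hMr,
          hfst measurable_const measurable_id',
          map_dens_const (c := 0) (fun x _ => (hρ0 x).le) (hρ0i' 0 ℓ le_rfl hℓX) (fun _ _ => rfl)]) (by
        rw [Measure.map_add _ _ measurable_snd, hsnd hSm hTm, hsnd measurable_const measurable_id',
          nuMeas_eq hΛ2, hM, hpush, ENNReal.ofReal_of_nonpos hM0.le, dens_split ρ0 hℓ.le hℓX]
        simp [add_comm, Measure.map_id'])
    rw [integral_add_measure, hcost hSm hTm, integral_map hm2.aemeasurable (by fun_prop)] at hub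
    · simp only [zero_sub, neg_sq] at hub
      rw [integral_dens (fun x _ => (hρ0 x).le) (hρ0i' 0 ℓ le_rfl hℓX)] at hub
      rw [hW, hold, intervalIntegral.integral_of_le hℓ.le, ← setIntegral_congr_set Ioo_ae_eq_Ioc,
        integral_sub (hintg hSm hSX' hTm hTX') (hintg measurable_id' hidX hTm hTX')]
      linarith
    · rw [integrable_map_measure (by fun_prop) (hSm.prodMk hTm).aemeasurable]
      refine Integrable.of_bound (C := X^2) (by
        exact (((hSm.sub hTm).pow_const 2)).aestronglyMeasurable) ?_
      filter_upwards [dens_ae] with x hx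
      have h1 := hSX' x hx
      have h2 := hTX' x (Ioo_subset_Icc_self hx)
      simp only [Function.comp]
      rw [Real.norm_eq_abs, abs_of_nonneg (sq_nonneg _), sq_le_sq, abs_of_pos hX]
      exact abs_le.2 ⟨by linarith [h1.1, h2.2], by linarith [h1.2, h2.1]⟩
    · rw [integrable_map_measure (by fun_prop) hm2.aemeasurable]
      refine Integrable.of_bound (C := ℓ^2) (by
        exact (by fun_prop : Measurable fun y : ℝ => ((0:ℝ) - y)^2).aestronglyMeasurable) ?_
      filter_upwards [dens_ae] with x hx
      simp only [Function.comp]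
      rw [Real.norm_eq_abs, abs_of_nonneg (sq_nonneg _), sq_le_sq, abs_of_pos hℓ]
      exact abs_le.2 ⟨by linarith [hx.1, hx.2], by linarith [hx.1, hx.2]⟩

/-! ### The Euler-Lagrange equation -/

lemma sub_two_sq_le_log {u : ℝ} (hu : |u| ≤ 1 / 2) : u - 2 * u^2 ≤ Real.log (1 + u) := by
  have h1 := (abs_le.1 hu).1
  have hpos : 0 < 1 + u := by linarith
  refine le_trans ?_ (Real.one_sub_inv_le_log_of_pos hpos)
  have : 1 - (1 + u)⁻¹ = u / (1 + u) := by field_simp; ring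
  rw [this, le_div_iff₀ hpos]
  nlinarith [mul_nonneg (sq_nonneg u) (by linarith : 0 ≤ 1 + 2 * u)]

/-- The integrand of the entropy transforms under a change of variables of Jacobian `s`. -/
lemma mul_fEnt_div (β : ℝ) {r s : ℝ} (hs : 0 < s) :
    s * fEnt β (r / s) = fEnt β r - r * Real.log s + β * (s - 1) := by
  unfold fEnt
  rcases eq_or_ne r 0 with rfl | hr
  · simp; ring
  · rw [Real.log_div hr hs.ne']
    field_simp
    ring

/-- A first-order expansion bounded below by zero on both sides has vanishing linear term. -/
lemma eq_zero_of_two_sided {A C : ℝ} (h : ∀ᶠ ε in 𝓝[≠] (0:ℝ), 0 ≤ ε * A + ε^2 * C) : A = 0 := by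
  have hlim : Tendsto (fun ε : ℝ => A + ε * C) (𝓝 0) (𝓝 A) := by
    have : Continuous fun ε : ℝ => A + ε * C := by fun_prop
    simpa using this.tendsto 0
  refine le_antisymm ?_ ?_
  · refine le_of_tendsto (hlim.mono_left (nhdsWithin_le_nhds (s := Iio 0))) ?_
    filter_upwards [h.filter_mono (nhdsWithin_mono 0 fun x hx => (mem_Iio.1 hx).ne),
      self_mem_nhdsWithin] with ε hε hneg
    have hneg := mem_Iio.1 hneg
    by_contra hc
    push Not at hc
    nlinarith [mul_neg_of_neg_of_pos hneg hc]
  · refine ge_of_tendsto (hlim.mono_left (nhdsWithin_le_nhds (s := Ioi 0))) ?_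
    filter_upwards [h.filter_mono (nhdsWithin_mono 0 fun x hx => (mem_Ioi.1 hx).ne'),
      self_mem_nhdsWithin] with ε hε hpos
    have hpos := mem_Ioi.1 hpos
    by_contra hc
    push Not at hc
    nlinarith [mul_neg_of_pos_of_neg hpos hc]

/-- The Euler–Lagrange identity for inner variations `x ↦ x + ε ξ(x)`. The condition `ξ'(X) ≠ 0`
makes `x_σ = X` for every small `ε ≠ 0`, so the cut-off in the definition of the distance
does not move. -/
lemma euler_lagrange {lam α β θ X0 τ mτ Kτ X B G ℓ : ℝ} {ρ0 ρ r g ξ T : ℝ → ℝ} (hX : 0 < X)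
    (hτ : 0 < τ)
    (hρ0 : ∀ x, 0 < ρ0 x) (hρ0i : IntegrableOn ρ0 (Ioo 0 X)) (hx0 : xA ρ0 ≤ X)
    (hr : Continuous r) (hr0 : ∀ x, 0 ≤ r x) (hrB : ∀ x, r x ≤ B)
    (hρr : ∀ᵐ x : ℝ, x ∈ Ioo 0 X → ρ x = r x)
    (hT : TransportStruct ρ0 ρ X T ℓ) (hTm : Measurable T) (hTX : ∀ x ∈ Icc 0 X, T x ∈ Icc 0 X)
    (hmin : IsJKOMin lam α β θ τ Kτ mτ X0 ρ0 X ρ)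
    (hg : Continuous g) (hgG : ∀ x, |g x| ≤ G) (hξ : ∀ x, HasDerivAt ξ (g x) x)
    (hξ0 : ξ 0 = 0) (hξX : ξ X = 0) (hgX : g X ≠ 0) :
    ∫ x in Ioo 0 X, ((x - T x) * r x / τ * ξ x - r x * g x) = 0 := by
  have hρ1 := ae_one_of_xA_le hmin.1.1 hmin.1.2
  have hξc : Continuous ξ := continuous_iff_continuousAt.2 fun x => (hξ x).continuousAt
  have hci : ∀ {f : ℝ → ℝ}, Continuous f → IntegrableOn f (Ioo 0 X) := fun hf =>
    (hf.integrableOn_Icc).mono_set Ioo_subset_Icc_self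
  have hTi : IntegrableOn (fun x => (x - T x) * r x / τ * ξ x) (Ioo 0 X) := by
    have h1 : IntegrableOn (fun x => (x - T x) * (r x / τ * ξ x)) (Icc 0 X) := by
      refine IntegrableOn.mul_continuousOn ?_ (by fun_prop) isCompact_Icc
      refine Measure.integrableOn_of_bounded (M := X) (by simp)
        (measurable_id.sub hTm).aestronglyMeasurable ?_
      refine (ae_restrict_iff' measurableSet_Icc).2 (ae_of_all _ fun x hx => ?_)
      have h2 := hTX x hx
      exact abs_le.2 ⟨by linarith [hx.1, h2.2], by linarith [hx.2, h2.1]⟩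
    refine (h1.mono_set Ioo_subset_Icc_self).congr_fun (fun x _ => ?_) measurableSet_Ioo
    ring
  have hρi : IntegrableOn ρ (Ioo 0 X) := by
    refine IntegrableOn.congr_fun_ae (hci hr) ?_
    filter_upwards [(ae_restrict_iff' measurableSet_Ioo).2 hρr] with x hx using hx.symm
  have hg0 : ∫ x in Ioo 0 X, g x = 0 := by
    rw [setIntegral_congr_set Ioo_ae_eq_Ioc, ← intervalIntegral.integral_of_le hX.le,
      intervalIntegral.integral_eq_sub_of_hasDerivAt (fun x _ => hξ x)
        (hg.intervalIntegrable _ _), hξ0, hξX, sub_zero]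
  refine eq_zero_of_two_sided (C := ∫ x in Ioo 0 X, (ξ x ^2 * r x / (2 * τ) + 2 * (r x * g x ^2))) ?_
  have hG : ∀ᶠ ε in 𝓝[≠] (0:ℝ), |ε| * G ≤ 1 / 2 := by
    have : Tendsto (fun ε : ℝ => |ε| * G) (𝓝 0) (𝓝 0) := by
      have : Continuous fun ε : ℝ => |ε| * G := by fun_prop
      simpa using this.tendsto 0
    exact (this.mono_left nhdsWithin_le_nhds).eventually_le_const (by norm_num)
  -- the excluded `ε` is the one for which `σ(X⁻) = r(X) / (1 + ε g(X))` equals `1`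
  have hne : ∀ᶠ ε in 𝓝[≠] (0:ℝ), ε ≠ (r X - 1) / g X := by
    rcases eq_or_ne ((r X - 1) / g X) 0 with h | h
    · rw [h]; exact self_mem_nhdsWithin
    · exact (eventually_ne_nhds h.symm).filter_mono nhdsWithin_le_nhds
  filter_upwards [hG, hne] with ε hε hεne
  obtain ⟨hinj, him, σ, hσm, hσ0, hσB, hσ1, hσS, hσX⟩ :=
    exists_pushforward hr hr0 hrB hg hgG hξ hξ0 hξX hε
  have hεg : ∀ x, |ε * g x| ≤ 1 / 2 := fun x => by
    rw [abs_mul]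
    exact (mul_le_mul_of_nonneg_left (hgG x) (abs_nonneg _)).trans hε
  have hpos : ∀ x, 0 < 1 + ε * g x := fun x => by
    have := (abs_le.1 (hεg x)).1; linarith
  have hd : ∀ x, HasDerivAt (fun x => x + ε * ξ x) (1 + ε * g x) x := fun x =>
    (hasDerivAt_id x).add ((hξ x).const_mul ε)
  have hSm : Measurable fun x => x + ε * ξ x := by fun_prop
  have hσ1' : ∀ᵐ y : ℝ, y ∈ Ioi X → σ y = 1 := ae_of_all _ fun y hy => hσ1 y (le_of_lt hy)
  have hxσ : xA σ = X := by
    refine le_antisymm (xA_le hX hσ1') (le_xA_of_tendsto hX hσ1' hσX fun h => hεne ?_)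
    rw [div_eq_one_iff_eq (hpos X).ne'] at h
    rw [h]; field_simp; ring
  have hσi : IntegrableOn σ (Ioo 0 X) :=
    Measure.integrableOn_of_bounded (M := max (2 * B) 1) (by simp) hσm.aestronglyMeasurable
      (ae_of_all _ fun y => by rw [Real.norm_eq_abs, abs_of_nonneg (hσ0 y)]; exact hσB y)
  have hMfun : Mfun σ = Mfun ρ := by
    rw [Mfun_eq hX hσ1' hσi, Mfun_eq hX hρ1 hρi, integral_of_cov hd hpos hinj him]
    congr 1
    refine setIntegral_congr_ae measurableSet_Ioo ?_
    filter_upwards [hρr] with x hx hx'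
    rw [hx hx', ← hσS x hx', mul_comm]
  have hM : Mdiff σ ρ0 = Mdiff ρ ρ0 := by rw [Mdiff, Mdiff, hMfun]
  have hW := W2sq_perturb hX hρ0 hρ0i hx0 hr hr0 hrB hρr hT hSm
    (fun x hx => by rw [← him]; exact mem_image_of_mem _ hx)
    (map_dens_of_cov hSm hd hpos hinj him hσS) hxσ hM
  have hJ := hmin.2 X σ ⟨memAdm_of_bdd hX hσm hσ0 hσB fun y hy => hσ1 y hy.le, hxσ.le⟩
  have hfσ : ∫ x in Ioi (0:ℝ), fEnt β (σ x) = ∫ x in Ioo 0 X,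
      (fEnt β (r x) - r x * Real.log (1 + ε * g x) + β * (ε * g x)) := by
    rw [integral_fEnt_eq β hσ1', integral_of_cov hd hpos hinj him]
    refine setIntegral_congr_fun measurableSet_Ioo fun x hx => ?_
    have h1 : σ (x + ε * ξ x) = r x / (1 + ε * g x) := by
      rw [eq_div_iff (hpos x).ne', hσS x hx]
    rw [h1, mul_fEnt_div β (hpos x)]
    ring
  have hfρ : ∫ x in Ioi (0:ℝ), fEnt β (ρ x) = ∫ x in Ioo 0 X, fEnt β (r x) := by
    rw [integral_fEnt_eq β hρ1]
    refine setIntegral_congr_ae measurableSet_Ioo ?_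
    filter_upwards [hρr] with x hx hx'
    rw [hx hx']
  have hfc : Continuous fun x => fEnt β (r x) := by
    have h1 : Continuous fun x => r x * Real.log (r x) := Real.continuous_mul_log.comp hr
    have h2 : (fun x => fEnt β (r x)) = fun x => r x * Real.log (r x) - β * r x + β := by
      funext x; unfold fEnt; ring
    rw [h2]; fun_prop
  have hlc : Continuous fun x => r x * Real.log (1 + ε * g x) :=
    hr.mul ((by fun_prop : Continuous fun x => 1 + ε * g x).log fun x => (hpos x).ne')
  have hi1 : IntegrableOn (fun x => (x + ε * ξ x - T x)^2 * r x - (x - T x)^2 * r x) (Ioo 0 X) := by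
    have h1 : IntegrableOn (fun x => 2 * ε * τ * ((x - T x) * r x / τ * ξ x) +
        ε^2 * ξ x ^2 * r x) (Ioo 0 X) :=
      (hTi.const_mul (2 * ε * τ)).add (hci (by fun_prop))
    refine h1.congr_fun (fun x _ => ?_) measurableSet_Ioo
    simp only
    field_simp
    ring
  have hcmp : (∫ x in Ioo 0 X, ((x + ε * ξ x - T x)^2 * r x - (x - T x)^2 * r x)) / (2 * τ)
      + ((∫ x in Ioo 0 X, (fEnt β (r x) - r x * Real.log (1 + ε * g x) + β * (ε * g x)))
        - ∫ x in Ioo 0 X, fEnt β (r x)) ≤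
      ε * (∫ x in Ioo 0 X, ((x - T x) * r x / τ * ξ x - r x * g x)) +
        ε^2 * ∫ x in Ioo 0 X, (ξ x ^2 * r x / (2 * τ) + 2 * (r x * g x ^2)) := by
    have hgβ : ∫ x in Ioo 0 X, β * (ε * g x) = 0 := by
      rw [integral_const_mul, integral_const_mul, hg0]; simp
    have hi2 : IntegrableOn (fun x => fEnt β (r x) - r x * Real.log (1 + ε * g x)) (Ioo 0 X) :=
      (hci hfc).sub (hci hlc)
    have hi3 : IntegrableOn (fun x => β * (ε * g x)) (Ioo 0 X) := hci (by fun_prop)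
    have hi4 : IntegrableOn (fun x => ε * ((x - T x) * r x / τ * ξ x - r x * g x)) (Ioo 0 X) :=
      (hTi.sub (hci (hr.mul hg))).const_mul ε
    have hi5 : IntegrableOn (fun x => ε^2 * (ξ x ^2 * r x / (2 * τ) + 2 * (r x * g x ^2)))
      (Ioo 0 X) := hci (by fun_prop)
    have hi6 : IntegrableOn (fun x => ((x + ε * ξ x - T x)^2 * r x - (x - T x)^2 * r x) / (2 * τ))
      (Ioo 0 X) := hi1.div_const _
    rw [integral_add hi2 hi3, hgβ, integral_sub (hci hfc) (hci hlc), ← integral_const_mul,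
      ← integral_const_mul, ← integral_add hi4 hi5, ← integral_div]
    have hre : ∀ a b c : ℝ, a + (b - c + 0 - b) = a - c := fun a b c => by ring
    rw [hre, ← integral_sub hi6 (hci hlc)]
    refine setIntegral_mono_on (hi6.sub (hci hlc)) (hi4.add hi5) measurableSet_Ioo fun x hx => ?_
    have hlog := mul_le_mul_of_nonneg_left (sub_two_sq_le_log (hεg x)) (hr0 x)
    have hsq : ((x + ε * ξ x - T x)^2 * r x - (x - T x)^2 * r x) / (2 * τ) =
        ε * ((x - T x) * r x / τ * ξ x) + ε^2 * (ξ x ^2 * r x / (2 * τ)) := by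
      field_simp; ring
    rw [hsq]
    nlinarith [hlog]
  refine le_trans ?_ hcmp
  have h2τ : 0 < 2 * τ := by linarith
  have hWd := div_le_div_of_nonneg_right hW h2τ.le
  simp only [Jfun, Efun, dsq] at hJ
  rw [hM, hfσ, hfρ, add_div, add_div] at hJ
  rw [sub_div] at hWd
  linarith

/-! ### Minimizers do not vanish identically -/

/-- A minimizer does not vanish identically on `(0,X)`: filling in a small constant density `δ`
lowers the entropy at rate `δ ln δ`, while it lowers the transport cost, `|M|` and the penalty. -/
lemma not_ae_zero {lam α β θ X0 τ mτ Kτ X m ℓ : ℝ} {ρ0 ρ T : ℝ → ℝ} (hX : 0 < X)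
    (hτ : 0 < τ) (hθ : 0 < θ) (hKτ : 0 < Kτ) (hm : 0 < m)
    (hρ0m : ∀ x, 0 < x → m ≤ ρ0 x) (hρ0i : IntegrableOn ρ0 (Ioo 0 X))
    (hx0 : xA ρ0 ≤ X) (hρ01 : ∀ᵐ y : ℝ, y ∈ Ioi X → ρ0 y = 1)
    (hT : TransportStruct ρ0 ρ X T ℓ)
    (hmin : IsJKOMin lam α β θ τ Kτ mτ X0 ρ0 X ρ)
    (hρr : ∀ᵐ x : ℝ, x ∈ Ioo 0 X → ρ x = 0) : False := by
  have hρ1 := ae_one_of_xA_le hmin.1.1 hmin.1.2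
  have hρae : ρ =ᵐ[volume.restrict (Ioo 0 X)] fun _ => (0:ℝ) :=
    (ae_restrict_iff' measurableSet_Ioo).2 hρr
  have hρi : IntegrableOn ρ (Ioo 0 X) :=
    IntegrableOn.congr_fun_ae (integrableOn_const (by simp) (by simp)) hρae.symm
  have hMρ : Mdiff ρ ρ0 = - ∫ x in Ioo 0 X, ρ0 x := by
    rw [Mdiff, Mfun_eq hX hρ1 hρi, Mfun_eq hX hρ01 hρ0i, integral_congr_ae hρae]
    simp
    ring
  have hlow : ∀ a b, 0 ≤ a → a ≤ b → b ≤ X → (b - a) * m ≤ ∫ x in Ioo a b, ρ0 x := by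
    intro a b ha hab hb
    have h1 : ∫ _ in Ioo a b, m = (b - a) * m := by simp [hab]
    rw [← h1]
    exact setIntegral_mono_on (integrableOn_const (by simp) (by simp))
      (hρ0i.mono_set (Ioo_subset_Ioo ha hb)) measurableSet_Ioo
      fun x hx => hρ0m x (ha.trans_lt hx.1)
  have hmass : 0 < ∫ x in Ioo 0 X, ρ0 x :=
    lt_of_lt_of_le (by nlinarith) (hlow 0 X le_rfl hX.le le_rfl)
  rcases hT with ⟨hM0, -⟩ | ⟨-, hℓ, -, -, hTX, -, -, -, hMℓ, hW⟩
  · linarith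
  have hℓX : ℓ ≤ X := (hTX 0 ⟨le_rfl, hX.le⟩).1.trans (hTX 0 ⟨le_rfl, hX.le⟩).2
  -- all of `ρ⁰` is transported to the origin
  have hℓeq : ℓ = X := by
    rw [hMρ, neg_neg, intervalIntegral.integral_of_le hℓ.le,
      ← setIntegral_congr_set Ioo_ae_eq_Ioc] at hMℓ
    have h1 : ∫ x in Ioo 0 X, ρ0 x = (∫ x in Ioo 0 ℓ, ρ0 x) + ∫ x in Ioo ℓ X, ρ0 x := by
      have hi1 : IntervalIntegrable ρ0 volume 0 ℓ :=
        (intervalIntegrable_iff_integrableOn_Ioo_of_le hℓ.le).2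
          (hρ0i.mono_set (Ioo_subset_Ioo le_rfl hℓX))
      have hi2 : IntervalIntegrable ρ0 volume ℓ X :=
        (intervalIntegrable_iff_integrableOn_Ioo_of_le hℓX).2
          (hρ0i.mono_set (Ioo_subset_Ioo hℓ.le le_rfl))
      have h2 := intervalIntegral.integral_add_adjacent_intervals hi1 hi2
      rw [intervalIntegral.integral_of_le hX.le, intervalIntegral.integral_of_le hℓ.le,
        intervalIntegral.integral_of_le hℓX] at h2
      simp only [← setIntegral_congr_set (μ := volume) (f := ρ0) Ioo_ae_eq_Ioc] at h2
      exact h2.symm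
    have h2 := hlow ℓ X hℓ.le hℓX le_rfl
    nlinarith
  subst hℓeq
  -- `δ < exp β` makes `f(δ) < f(0)`; `δ < 1` keeps `x_σ = X`
  obtain ⟨δ, hδ0, hδm, hδ1, hδβ⟩ : ∃ δ : ℝ, 0 < δ ∧ δ ≤ m ∧ δ < 1 ∧ δ < Real.exp β := by
    have hp : 0 < min m (min 1 (Real.exp β)) := lt_min hm (lt_min one_pos (Real.exp_pos _))
    refine ⟨min m (min 1 (Real.exp β)) / 2, by positivity, ?_, ?_, ?_⟩
    · linarith [min_le_left m (min 1 (Real.exp β))]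
    · linarith [(min_le_right m (min 1 (Real.exp β))).trans (min_le_left _ _)]
    · linarith [(min_le_right m (min 1 (Real.exp β))).trans (min_le_right _ _)]
  set σ : ℝ → ℝ := fun y => if y < ℓ then δ else 1 with hσdef
  have hσm : Measurable σ := Measurable.ite measurableSet_Iio measurable_const measurable_const
  have hσδ : ∀ x ∈ Ioo 0 ℓ, σ x = δ := fun x hx => by simp [hσdef, hx.2]
  have hσ1 : ∀ y, ℓ < y → σ y = 1 := fun y hy => by simp [hσdef, hy.le]
  have hσ1' : ∀ᵐ y : ℝ, y ∈ Ioi ℓ → σ y = 1 := ae_of_all _ hσ1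
  have hσ0 : ∀ y, 0 ≤ σ y := fun y => by simp only [hσdef]; split_ifs <;> linarith
  have hσB : ∀ y, σ y ≤ 1 := fun y => by simp only [hσdef]; split_ifs <;> linarith
  have hσlim : Tendsto σ (𝓝[<] ℓ) (𝓝 δ) := by
    refine tendsto_const_nhds.congr' ?_
    filter_upwards [self_mem_nhdsWithin] with y hy
    simp [hσdef, mem_Iio.1 hy]
  have hxσ : xA σ = ℓ := le_antisymm (xA_le hX hσ1') (le_xA_of_tendsto hX hσ1' hσlim hδ1.ne)
  have hci : ∀ c : ℝ, IntegrableOn (fun _ => c) (Ioo 0 ℓ) := fun c =>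
    integrableOn_const (by simp) (by simp)
  have hσi : IntegrableOn σ (Ioo 0 ℓ) :=
    (hci δ).congr_fun (fun x hx => (hσδ x hx).symm) measurableSet_Ioo
  have hρδi : IntegrableOn (fun x => ρ0 x - δ) (Ioo 0 ℓ) := hρ0i.sub (hci δ)
  have hρδ0 : ∀ x ∈ Ioo 0 ℓ, 0 ≤ ρ0 x - δ := fun x hx => by linarith [hρ0m x hx.1]
  have hMσ' : -Mdiff σ ρ0 = ∫ x in Ioo 0 ℓ, (ρ0 x - δ) := by
    rw [Mdiff, Mfun_eq hX hσ1' hσi, Mfun_eq hX hρ01 hρ0i, integral_sub hρ0i (hci δ),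
      setIntegral_congr_fun measurableSet_Ioo hσδ]
    ring
  have hMσ : Mdiff σ ρ0 = δ * ℓ - ∫ x in Ioo 0 ℓ, ρ0 x := by
    rw [integral_sub hρ0i (hci δ)] at hMσ'
    simp [hX.le] at hMσ'
    linarith
  have hMσ0 : Mdiff σ ρ0 ≤ 0 := by
    have : 0 ≤ ∫ x in Ioo 0 ℓ, (ρ0 x - δ) := setIntegral_nonneg measurableSet_Ioo hρδ0
    linarith
  have hΛ1 : max (xA σ) (xA ρ0) = ℓ := by rw [hxσ, max_eq_left hx0]
  have hΛ2 : max (xA ρ0) (xA σ) = ℓ := by rw [max_comm, hΛ1]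
  have hdσ : dens σ 0 ℓ = dens (fun _ => δ) 0 ℓ := dens_congr (ae_of_all _ hσδ)
  have hm1 : Measurable fun x : ℝ => (x, x) := measurable_id.prodMk measurable_id
  have hm2 : Measurable fun y : ℝ => ((0:ℝ), y) := measurable_const.prodMk measurable_id
  have hf1 := dens_finite (hci δ)
  have hf2 := dens_finite hρδi
  -- keep the mass `δ` at rest and send the excess `ρ⁰ - δ` to the origin
  have hub := W2sq_le (ρ := σ) (ρt := ρ0) ((dens (fun _ => δ) 0 ℓ).map (fun x => (x, x)) +
      (dens (fun x => ρ0 x - δ) 0 ℓ).map fun y => (0, y)) (by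
      rw [Measure.map_add _ _ measurable_fst, Measure.map_map measurable_fst hm1,
        Measure.map_map measurable_fst hm2, nuMeas_eq hΛ1, Mdiff_symm, hMσ', hdσ,
        map_dens_const (f := Prod.fst ∘ fun y => ((0:ℝ), y)) (c := 0) hρδ0 hρδi
          (fun _ _ => rfl)]
      simp [Function.comp_def, Measure.map_id']) (by
      rw [Measure.map_add _ _ measurable_snd, Measure.map_map measurable_snd hm1,
        Measure.map_map measurable_snd hm2, nuMeas_eq hΛ2, ENNReal.ofReal_of_nonpos hMσ0]
      simp only [Function.comp_def, Measure.map_id', zero_smul, add_zero]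
      rw [dens, dens, dens, ← withDensity_add_left (by fun_prop)]
      refine withDensity_congr_ae ?_
      filter_upwards [ae_restrict_mem measurableSet_Ioo] with x hx
      simp only [Pi.add_apply]
      rw [← ENNReal.ofReal_add hδ0.le (hρδ0 x hx)]
      congr 1; ring)
  rw [integral_add_measure, integral_map hm1.aemeasurable (by fun_prop),
    integral_map hm2.aemeasurable (by fun_prop)] at hub
  rotate_left
  · rw [integrable_map_measure (by fun_prop) hm1.aemeasurable]
    simp [Function.comp_def]
  · rw [integrable_map_measure (by fun_prop) hm2.aemeasurable]
    refine Integrable.of_bound (C := ℓ^2) (by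
      exact (by fun_prop : Measurable fun y : ℝ => ((0:ℝ) - y)^2).aestronglyMeasurable) ?_
    filter_upwards [dens_ae] with x hx
    simp only [Function.comp]
    rw [Real.norm_eq_abs, abs_of_nonneg (sq_nonneg _), sq_le_sq, abs_of_pos hℓ]
    exact abs_le.2 ⟨by linarith [hx.1, hx.2], by linarith [hx.1, hx.2]⟩
  rw [integral_dens hρδ0 hρδi] at hub
  simp only [sub_self, zero_sub, neg_sq] at hub
  have hsqi : ∀ {f : ℝ → ℝ}, IntegrableOn f (Ioo 0 ℓ) →
      IntegrableOn (fun x => x^2 * f x) (Ioo 0 ℓ) := by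
    intro f hf
    rw [← integrableOn_Icc_iff_integrableOn_Ioo] at hf ⊢
    exact hf.continuousOn_mul (by fun_prop) isCompact_Icc
  have hWle : W2sq σ ρ0 ≤ W2sq ρ ρ0 := by
    rw [hW, intervalIntegral.integral_of_le hX.le, intervalIntegral.integral_of_le hX.le,
      ← setIntegral_congr_set Ioo_ae_eq_Ioc, ← setIntegral_congr_set Ioo_ae_eq_Ioc]
    have h1 : ∫ x in Ioo 0 ℓ, (x - T x)^2 * ρ x = 0 := by
      rw [integral_congr_ae (g := fun _ => (0:ℝ))]
      · simp
      · filter_upwards [hρae] with x hx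
        simp [hx]
    have h2 : ∫ x in Ioo 0 ℓ, x^2 * (ρ0 x - δ) ≤ ∫ x in Ioo 0 ℓ, x^2 * ρ0 x :=
      setIntegral_mono_on (hsqi hρδi) (hsqi hρ0i) measurableSet_Ioo
        fun x _ => mul_le_mul_of_nonneg_left (by linarith) (sq_nonneg x)
    have h3 : ∫ _ : ℝ, (0:ℝ)^2 ∂(dens (fun _ => δ) 0 ℓ) = 0 := by simp
    rw [h1, zero_add]
    rw [h3, zero_add] at hub
    exact hub.trans h2
  have hJ := hmin.2 ℓ σ ⟨memAdm_of_bdd hX hσm hσ0 hσB hσ1, hxσ.le⟩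
  have hfσ : ∫ x in Ioi (0:ℝ), fEnt β (σ x) = ℓ * fEnt β δ := by
    rw [integral_fEnt_eq β hσ1', setIntegral_congr_fun (g := fun _ => fEnt β δ) measurableSet_Ioo
      (fun x hx => by simp only [hσδ x hx])]
    simp [hX.le]
  have hfρ : ∫ x in Ioi (0:ℝ), fEnt β (ρ x) = ℓ * β := by
    rw [integral_fEnt_eq β hρ1, integral_congr_ae (g := fun _ => β)]
    · simp [hX.le]
    · filter_upwards [hρae] with x hx
      simp [hx, fEnt]
  have hlog : Real.log δ < β := (Real.log_lt_iff_lt_exp hδ0).2 hδβ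
  have hflt : ℓ * fEnt β δ < ℓ * β := by
    refine mul_lt_mul_of_pos_left ?_ hX
    unfold fEnt
    nlinarith
  have hMle : Mdiff ρ ρ0 ≤ Mdiff σ ρ0 := by
    rw [hMρ, hMσ]; nlinarith
  have habs : |Mdiff σ ρ0| ≤ |Mdiff ρ ρ0| := by
    rw [abs_of_nonpos hMσ0, abs_of_nonpos (hMle.trans hMσ0)]; linarith
  have hp : ptau Kτ mτ (Mdiff σ ρ0) ≤ ptau Kτ mτ (Mdiff ρ ρ0) := by
    unfold ptau
    refine mul_le_mul_of_nonneg_left ?_ (by positivity)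
    exact pow_le_pow_left₀ (le_max_right _ _) (max_le_max (by linarith) le_rfl) 2
  simp only [Jfun, Efun, dsq] at hJ
  rw [hfσ, hfρ, add_div, add_div] at hJ
  have h2 := div_le_div_of_nonneg_right hWle (by linarith : 0 ≤ 2 * τ)
  have h3 := mul_le_mul_of_nonneg_left habs hθ.le
  linarith

/-! ### From the weak equation to the exponential formula -/

/-- Only continuity at the single point is needed, so a monotone `T` may have jumps elsewhere. -/
lemma hasDerivAt_primitive {q : ℝ → ℝ} (hq : Measurable q)
    (hi : ∀ a b, IntervalIntegrable q volume a b) {x : ℝ} (hx : ContinuousAt q x) :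
    HasDerivAt (fun y => ∫ s in (0:ℝ)..y, q s) (q x) x :=
  intervalIntegral.integral_hasDerivAt_right (hi 0 x)
    hq.stronglyMeasurable.stronglyMeasurableAtFilter hx

lemma lipschitz_primitive {q : ℝ → ℝ} {X C : ℝ} (hi : ∀ a b, IntervalIntegrable q volume a b)
    (hC0 : 0 ≤ C) (hC : ∀ x ∈ Icc 0 X, |q x| ≤ C) :
    LipschitzOnWith C.toNNReal (fun y => ∫ s in (0:ℝ)..y, q s) (Icc 0 X) := by
  refine LipschitzOnWith.of_dist_le_mul fun x hx y hy => ?_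
  rw [Real.dist_eq, intervalIntegral.integral_interval_sub_left (hi _ _) (hi _ _), Real.dist_eq,
    Real.coe_toNNReal _ hC0]
  refine intervalIntegral.norm_integral_le_of_norm_le_const (f := q) (C := C)
    (fun z hz => ?_)
  rw [Real.norm_eq_abs]
  refine hC z ?_
  rcases le_total y x with h | h
  · rw [uIoc_of_le h] at hz
    exact ⟨hy.1.trans hz.1.le, hz.2.trans hx.2⟩
  · rw [uIoc_of_ge h] at hz
    exact ⟨hx.1.trans hz.1.le, hz.2.trans hy.2⟩

/-- du Bois-Reymond lemma, with test functions that additionally do not vanish at `X`. -/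
lemma eq_const_of_orthogonal {X : ℝ} {h : ℝ → ℝ} (hX : 0 < X) (hh : Continuous h)
    (H : ∀ g : ℝ → ℝ, Continuous g → (∃ G, ∀ x, |g x| ≤ G) → ∫ x in (0:ℝ)..X, g x = 0 → g X ≠ 0 →
      ∫ x in (0:ℝ)..X, h x * g x = 0) : ∃ c, ∀ x ∈ Icc 0 X, h x = c := by
  set c := (∫ x in (0:ℝ)..X, h x) / X with hc
  refine ⟨c, ?_⟩
  set P : ℝ → ℝ := fun x => max 0 (min x X) with hP
  have hPc : Continuous P := by fun_prop
  have hPm : ∀ x, P x ∈ Icc 0 X := fun x => ⟨le_max_left _ _, max_le hX.le (min_le_right _ _)⟩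
  have hPe : ∀ x ∈ Icc 0 X, P x = x := fun x hx => by
    simp only [hP]; rw [min_eq_left hx.2, max_eq_right hx.1]
  have hbdd : ∀ {f : ℝ → ℝ}, Continuous f → ∃ G, ∀ x, |f (P x)| ≤ G := fun hf => by
    obtain ⟨G, hG⟩ := (isCompact_Icc (a := 0) (b := X)).exists_bound_of_continuousOn hf.continuousOn
    exact ⟨G, fun x => hG _ (hPm x)⟩
  have hintg : ∀ f k : ℝ → ℝ, ∫ x in (0:ℝ)..X, k x * f (P x) = ∫ x in (0:ℝ)..X, k x * f x := by
    intro f k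
    refine intervalIntegral.integral_congr fun x hx => ?_
    rw [uIcc_of_le hX.le] at hx
    simp only [hPe x hx]
  have H' : ∀ f : ℝ → ℝ, Continuous f → ∫ x in (0:ℝ)..X, f x = 0 → f X ≠ 0 →
      ∫ x in (0:ℝ)..X, h x * f x = 0 := by
    intro f hf hf0 hfX
    rw [← hintg]
    refine H (fun x => f (P x)) (hf.comp hPc) (hbdd hf) ?_ ?_
    · have := hintg f fun _ => 1
      simp only [one_mul] at this
      rw [this, hf0]
    · rwa [hPe X ⟨hX.le, le_rfl⟩]
  have hl0 : ∫ x in (0:ℝ)..X, (x - X / 2) = 0 := by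
    rw [intervalIntegral.integral_sub (by simp) (by simp)]
    simp; ring
  have hlX : X - X / 2 ≠ 0 := by linarith
  have hk0 : ∫ x in (0:ℝ)..X, (h x - c) = 0 := by
    rw [intervalIntegral.integral_sub (hh.intervalIntegrable _ _) (by simp), hc]
    simp; field_simp; ring
  -- if the test function `h - c` vanishes at `X`, add the admissible `x - X / 2` to it
  have hkk : ∫ x in (0:ℝ)..X, h x * (h x - c) = 0 := by
    by_cases hz : h X - c = 0
    · have h1 := H' (fun x => x - X / 2) (by fun_prop) hl0 hlX
      have h2 := H' (fun x => (h x - c) + (x - X / 2)) (by fun_prop) (by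
        rw [intervalIntegral.integral_add ((by fun_prop : Continuous fun x => h x - c).intervalIntegrable _ _)
          ((by fun_prop : Continuous fun x : ℝ => x - X / 2).intervalIntegrable _ _), hk0, hl0, add_zero])
        (by simp only [hz, zero_add]; exact hlX)
      simp only [mul_add] at h2
      rw [intervalIntegral.integral_add
        ((by fun_prop : Continuous fun x => h x * (h x - c)).intervalIntegrable _ _)
        ((by fun_prop : Continuous fun x => h x * (x - X / 2)).intervalIntegrable _ _),
        h1, add_zero] at h2
      exact h2
    · exact H' (fun x => h x - c) (by fun_prop) hk0 hz
  have hsq : ∫ x in (0:ℝ)..X, (h x - c)^2 = 0 := by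
    have h1 : (fun x => (h x - c)^2) = fun x => h x * (h x - c) - c * (h x - c) := by
      funext x; ring
    rw [h1, intervalIntegral.integral_sub
      ((by fun_prop : Continuous fun x => h x * (h x - c)).intervalIntegrable _ _)
      ((by fun_prop : Continuous fun x => c * (h x - c)).intervalIntegrable _ _), hkk,
      intervalIntegral.integral_const_mul, hk0]
    simp
  intro x hx
  by_contra hne
  have : 0 < ∫ x in (0:ℝ)..X, (h x - c)^2 :=
    intervalIntegral.integral_pos hX (by fun_prop) (fun x _ => sq_nonneg _)
      ⟨x, hx, by have := sub_ne_zero.2 hne; positivity⟩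
  linarith

/-- The weak Euler-Lagrange equation integrated once: `r + ∫₀ˣ (s - t) r / τ` is constant. -/
lemma integrated_euler_lagrange {X τ : ℝ} {t r : ℝ → ℝ} (hX : 0 < X) (ht : Monotone t)
    (htm : Measurable t) (hr : Continuous r)
    (H : ∀ g ξ : ℝ → ℝ, Continuous g → (∃ G, ∀ x, |g x| ≤ G) → (∀ x, HasDerivAt ξ (g x) x) →
      ξ 0 = 0 → ξ X = 0 → g X ≠ 0 →
      ∫ x in (0:ℝ)..X, ((x - t x) * r x / τ * ξ x - r x * g x) = 0) :
    ∃ c, ∀ x ∈ Icc 0 X, (∫ s in (0:ℝ)..x, (s - t s) * r s / τ) + r x = c := by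
  set w : ℝ → ℝ := fun s => (s - t s) * r s / τ with hw
  have hwm : Measurable w := by
    have := hr.measurable
    fun_prop
  have hwi : ∀ a b, IntervalIntegrable w volume a b := fun a b =>
    (((continuous_id.intervalIntegrable a b).sub ht.intervalIntegrable).mul_continuousOn
      hr.continuousOn).div_const τ
  have hWc : Continuous fun x => ∫ s in (0:ℝ)..x, w s := intervalIntegral.continuous_primitive hwi 0
  refine eq_const_of_orthogonal hX (hWc.add hr) fun g hg hG hg0 hgX => ?_
  set ξ : ℝ → ℝ := fun x => ∫ s in (0:ℝ)..x, g s with hξ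
  have hξd : ∀ x, HasDerivAt ξ (g x) x := fun x =>
    intervalIntegral.integral_hasDerivAt_right (hg.intervalIntegrable _ _)
      hg.measurable.stronglyMeasurable.stronglyMeasurableAtFilter hg.continuousAt
  have hξc : Continuous ξ := continuous_iff_continuousAt.2 fun x => (hξd x).continuousAt
  have h1 := H g ξ hg hG hξd (by simp [hξ]) hg0 hgX
  have hi1 : IntervalIntegrable (fun x => w x * ξ x) volume 0 X :=
    (hwi 0 X).mul_continuousOn hξc.continuousOn
  have hi2 : IntervalIntegrable (fun x => (∫ s in (0:ℝ)..x, w s) * g x) volume 0 X :=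
    (hWc.mul hg).intervalIntegrable _ _
  have hi3 : IntervalIntegrable (fun x => r x * g x) volume 0 X :=
    (hr.mul hg).intervalIntegrable _ _
  have h2 : ∫ x in (0:ℝ)..X, (w x * ξ x + (∫ s in (0:ℝ)..x, w s) * g x) = 0 := by
    rw [integral_eq_of_hasDerivAt_off_countable_of_le
      (fun x => (∫ s in (0:ℝ)..x, w s) * ξ x) _ hX.le ht.countable_not_continuousAt
      (hWc.mul hξc).continuousOn _ (hi1.add hi2)]
    · simp [hξ, hg0]
    · rintro x ⟨-, hx⟩
      have hx : ContinuousAt t x := not_not.1 hx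
      exact (hasDerivAt_primitive hwm hwi
        (((continuousAt_id.sub hx).mul hr.continuousAt).div_const τ)).mul (hξd x)
  rw [intervalIntegral.integral_add hi1 hi2] at h2
  rw [intervalIntegral.integral_sub hi1 hi3] at h1
  simp only [add_mul]
  rw [intervalIntegral.integral_add hi2 hi3]
  linarith

/-- The integrated equation is the linear ODE `r' = -(x - t) r / τ`, valid off a countable set; its
solution is an exponential. -/
lemma eq_exp_of_integrated {X τ c : ℝ} {t r : ℝ → ℝ} (ht : Monotone t)
    (htm : Measurable t) (hr : Continuous r)
    (hc : ∀ x ∈ Icc 0 X, (∫ s in (0:ℝ)..x, (s - t s) * r s / τ) + r x = c) :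
    ∀ x ∈ Icc 0 X, r x = r 0 * Real.exp (-(∫ s in (0:ℝ)..x, (s - t s)) / τ) := by
  set w : ℝ → ℝ := fun s => (s - t s) * r s / τ with hw
  have hwm : Measurable w := by
    have := hr.measurable
    fun_prop
  have hqi : ∀ a b, IntervalIntegrable (fun s => s - t s) volume a b := fun a b =>
    (continuous_id.intervalIntegrable a b).sub ht.intervalIntegrable
  have hwi : ∀ a b, IntervalIntegrable w volume a b := fun a b =>
    ((hqi a b).mul_continuousOn hr.continuousOn).div_const τ
  have hWc : Continuous fun x => ∫ s in (0:ℝ)..x, w s := intervalIntegral.continuous_primitive hwi 0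
  have hΨc : Continuous fun x => ∫ s in (0:ℝ)..x, (s - t s) :=
    intervalIntegral.continuous_primitive hqi 0
  intro x hx
  have h0 : r 0 = c := by
    simpa using hc 0 ⟨le_rfl, hx.1.trans hx.2⟩
  have h1 : ∫ _ in (0:ℝ)..x, (0:ℝ) =
      (c - ∫ s in (0:ℝ)..x, w s) * Real.exp ((∫ s in (0:ℝ)..x, (s - t s)) / τ) -
        (c - ∫ s in (0:ℝ)..0, w s) * Real.exp ((∫ s in (0:ℝ)..0, (s - t s)) / τ) := by
    refine integral_eq_of_hasDerivAt_off_countable_of_le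
      (fun x => (c - ∫ s in (0:ℝ)..x, w s) * Real.exp ((∫ s in (0:ℝ)..x, (s - t s)) / τ))
      (fun _ => 0) hx.1 ht.countable_not_continuousAt
      (by fun_prop) ?_ (by simp)
    rintro y ⟨hy, hyt⟩
    have hyt : ContinuousAt t y := not_not.1 hyt
    have hd1 := hasDerivAt_primitive hwm hwi
      (((continuousAt_id.sub hyt).mul hr.continuousAt).div_const τ)
    have hd2 := hasDerivAt_primitive (measurable_id.sub htm) hqi (continuousAt_id.sub hyt)
    refine ((hd1.const_sub c).mul (hd2.div_const τ).exp).congr_deriv ?_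
    have := hc y ⟨hy.1.le, hy.2.le.trans hx.2⟩
    have : c - ∫ s in (0:ℝ)..y, w s = r y := by linarith
    simp only [Pi.sub_apply, id] at *
    rw [this]
    simp only [hw]
    ring
  have h2 : c - ∫ s in (0:ℝ)..x, w s = r x := by linarith [hc x hx]
  simp only [intervalIntegral.integral_zero, intervalIntegral.integral_same, h2, sub_zero, zero_div,
    Real.exp_zero, mul_one] at h1
  rw [neg_div, Real.exp_neg, h0, eq_mul_inv_iff_mul_eq₀ (Real.exp_pos _).ne']
  linarith

/-! ### The Kantorovich potential -/

/-- In both sign cases `T` is a nondecreasing map of `[0,X]` into itself. -/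
lemma transport_mem {ρ0 ρ T : ℝ → ℝ} {X ℓ : ℝ} (h : TransportStruct ρ0 ρ X T ℓ) :
    Measurable T ∧ MonotoneOn T (Icc 0 X) ∧ ∀ x ∈ Icc 0 X, T x ∈ Icc 0 X := by
  rcases h with ⟨-, -, ℓp, -, h1, h2, h3, -⟩ | ⟨-, h0, h1, h2, h3, -⟩
  · exact ⟨h1, h2, h3⟩
  · exact ⟨h1, h2, fun x hx => ⟨h0.le.trans (h3 x hx).1, (h3 x hx).2⟩⟩

/-- Corollary 3.6, optimality condition and Lipschitz continuity.
Let `(X, ρ)` be a minimizer of the JKO functional with `X ≥ X⁰` and transport map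
`Tmap`, and let `ρ̄` be the continuous representative of `ρ` on `[0,X]`. Then there
exist a constant `C` and a Lipschitz function `Ψ` (Kantorovich potential) with
`Ψ'(x) = x − T(x)` for a.e. `x ∈ (0,X)` such that `Ψ(x)/τ + ln ρ̄(x) = C` on `[0,X]`;
consequently `ρ̄(x) = exp(C − Ψ(x)/τ)` on `[0,X]` and `ρ̄` is Lipschitz on `[0,X]`. -/
theorem optimality_condition_kantorovich_potential
    (lam α β θ T X0 ρmin ρmax τ mτ Kτ : ℝ) (ρ0 ρ0' : ℝ → ℝ)
    (hlam : 0 < lam) (hα : 0 < α) (hθ : 0 < θ) (hβθ : β + θ < 1) (hT : 0 < T)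
    (hH2 : H2 β θ X0 ρmin ρmax ρ0 ρ0')
    (hτ0 : 0 < τ) (hτ1 : τ < 1) (hmτ : 0 < mτ) (hKτ : 0 < Kτ)
    (X : ℝ) (ρ ρb : ℝ → ℝ)
    (hmin : IsJKOMin lam α β θ τ Kτ mτ X0 ρ0 X ρ) (hXX0 : X0 ≤ X)
    (Tmap : ℝ → ℝ) (ℓ : ℝ)
    (htrans : TransportStruct ρ0 ρ X Tmap ℓ)
    (hrep : ContRep X ρ ρb) :
    ∃ C : ℝ, ∃ Ψ : ℝ → ℝ,
      (∃ K : NNReal, LipschitzOnWith K Ψ (Icc 0 X)) ∧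
      (∀ᵐ x : ℝ, x ∈ Ioo 0 X → HasDerivAt Ψ (x - Tmap x) x) ∧
      (∀ x ∈ Icc 0 X, Ψ x / τ + Real.log (ρb x) = C) ∧
      (∀ x ∈ Icc 0 X, ρb x = Real.exp (C - Ψ x / τ)) ∧
      (∃ K' : NNReal, LipschitzOnWith K' ρb (Icc 0 X)) := by
  obtain ⟨hX0, hρ0, hρ0d, -, hρ0one, -, hρm, hρ0b, hρM⟩ := hH2
  have hX : 0 < X := hX0.trans_le hXX0
  obtain ⟨hTm, hTmono, hTX⟩ := transport_mem htrans
  obtain ⟨hρbc, hρρb⟩ := hrep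
  -- the initial density
  have hρ0m : ∀ x, 0 < x → ρmin ≤ ρ0 x := by
    intro x hx
    rcases le_or_gt x X0 with h | h
    · exact (hρ0b x ⟨hx, h⟩).1
    · rw [hρ0one x h]
      have := hρ0b X0 ⟨hX0, le_rfl⟩
      linarith
  have hρ01 : ∀ᵐ y : ℝ, y ∈ Ioi X → ρ0 y = 1 :=
    ae_of_all _ fun y hy => hρ0one y (hXX0.trans_lt hy)
  have hx0 : xA ρ0 ≤ X := xA_le hX hρ01
  have hρ0i : IntegrableOn ρ0 (Ioo 0 X) := by
    have h1 : IntegrableOn ρ0 (Icc 0 X0) :=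
      ContinuousOn.integrableOn_Icc fun x hx => (hρ0d x hx).continuousWithinAt
    have h2 : IntegrableOn ρ0 (Ioc X0 X) :=
      (integrableOn_const (C := (1:ℝ)) (by simp) (by simp)).congr_fun
        (fun x hx => (hρ0one x hx.1).symm) measurableSet_Ioc
    refine (h1.union h2).mono_set fun x hx => ?_
    rcases le_or_gt x X0 with h | h
    · exact Or.inl ⟨hx.1.le, h⟩
    · exact Or.inr ⟨h, hx.2.le⟩
  -- constant extensions of `ρ̄` and `T` outside `[0,X]`
  set P : ℝ → ℝ := fun x => max 0 (min x X) with hP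
  have hPc : Continuous P := by fun_prop
  have hPm : ∀ x, P x ∈ Icc 0 X := fun x => ⟨le_max_left _ _, max_le hX.le (min_le_right _ _)⟩
  have hPe : ∀ x ∈ Icc 0 X, P x = x := fun x hx => by
    simp only [hP]; rw [min_eq_left hx.2, max_eq_right hx.1]
  have hPmono : Monotone P := fun x y h => max_le_max le_rfl (min_le_min h le_rfl)
  set r : ℝ → ℝ := fun x => max 0 (ρb (P x)) with hr
  have hρbP : Continuous fun x => ρb (P x) := hρbc.comp_continuous hPc hPm
  have hrc : Continuous r := continuous_const.max hρbP
  have hr0 : ∀ x, 0 ≤ r x := fun x => le_max_left _ _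
  obtain ⟨B, hB⟩ : ∃ B, ∀ x, r x ≤ B := by
    obtain ⟨B, hB⟩ := (isCompact_Icc (a := 0) (b := X)).exists_bound_of_continuousOn hρbc
    refine ⟨B, fun x => max_le ((norm_nonneg _).trans (hB _ (hPm x))) ?_⟩
    exact (le_abs_self _).trans (hB _ (hPm x))
  have hρr : ∀ᵐ x : ℝ, x ∈ Ioo 0 X → ρ x = r x := by
    filter_upwards [hρρb, hmin.1.1.1] with x h1 h2 hx
    simp only [hr]
    rw [hPe x ⟨hx.1.le, hx.2.le⟩, ← h1 hx, max_eq_right (h2 hx.1)]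
  have hbr : ∀ x ∈ Icc 0 X, ρb x = r x := by
    refine Measure.eqOn_Icc_of_ae_eq volume hX.ne ?_ hρbc hrc.continuousOn
    rw [← restrict_Ioo_eq_restrict_Icc]
    refine (ae_restrict_iff' measurableSet_Ioo).2 ?_
    filter_upwards [hρρb, hρr] with x h1 h2 hx
    rw [← h1 hx, h2 hx]
  set t : ℝ → ℝ := fun x => Tmap (P x) with ht
  have htmono : Monotone t := fun x y h => hTmono (hPm x) (hPm y) (hPmono h)
  have htm : Measurable t := hTm.comp hPc.measurable
  have htX : ∀ x, t x ∈ Icc 0 X := fun x => hTX _ (hPm x)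
  have hte : ∀ x ∈ Icc 0 X, t x = Tmap x := fun x hx => by simp only [ht, hPe x hx]
  obtain ⟨c, hc⟩ := integrated_euler_lagrange (τ := τ) hX htmono htm hrc
    (fun g ξ hg ⟨G, hG⟩ hξ hξ0 hξX hgX => by
      have h1 := euler_lagrange hX hτ0 hρ0 hρ0i hx0 hrc hr0 hB hρr htrans hTm hTX hmin hg hG hξ
        hξ0 hξX hgX
      rw [intervalIntegral.integral_of_le hX.le, ← setIntegral_congr_set Ioo_ae_eq_Ioc]
      refine (setIntegral_congr_fun measurableSet_Ioo fun x hx => ?_).trans h1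
      simp only [hte x ⟨hx.1.le, hx.2.le⟩])
  have hexp := eq_exp_of_integrated htmono htm hrc hc
  have hr0pos : 0 < r 0 := by
    refine (hr0 0).lt_of_ne' fun h0 => ?_
    refine not_ae_zero hX hτ0 hθ hKτ hρm hρ0m hρ0i hx0 hρ01 htrans hmin ?_
    filter_upwards [hρr] with x h1 hx
    rw [h1 hx, hexp x ⟨hx.1.le, hx.2.le⟩, h0, zero_mul]
  have hqi : ∀ a b, IntervalIntegrable (fun s => s - t s) volume a b := fun a b =>
    (continuous_id.intervalIntegrable a b).sub htmono.intervalIntegrable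
  have hwi : ∀ a b, IntervalIntegrable (fun s => (s - t s) * r s / τ) volume a b := fun a b =>
    ((hqi a b).mul_continuousOn hrc.continuousOn).div_const τ
  have hqX : ∀ x ∈ Icc 0 X, |x - t x| ≤ X := fun x hx =>
    abs_le.2 ⟨by linarith [hx.1, (htX x).2], by linarith [hx.2, (htX x).1]⟩
  have hform : ∀ x ∈ Icc 0 X,
      ρb x = Real.exp (Real.log (r 0) - (∫ s in (0:ℝ)..x, (s - t s)) / τ) := by
    intro x hx
    rw [hbr x hx, hexp x hx, sub_eq_add_neg, Real.exp_add, Real.exp_log hr0pos, neg_div]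
  refine ⟨Real.log (r 0), fun x => ∫ s in (0:ℝ)..x, (s - t s),
    ⟨_, lipschitz_primitive hqi hX.le hqX⟩, ?_, ?_, hform, ?_⟩
  · filter_upwards [htmono.countable_not_continuousAt.ae_notMem volume] with x hxt hx
    have hxt : ContinuousAt t x := not_not.1 hxt
    rw [← hte x ⟨hx.1.le, hx.2.le⟩]
    exact hasDerivAt_primitive (measurable_id.sub htm) hqi (continuousAt_id.sub hxt)
  · intro x hx
    rw [hform x hx, Real.log_exp]
    ring
  · have hB0 : 0 ≤ B := (hr0 0).trans (hB 0)
    have hL := lipschitz_primitive (X := X) (C := X * B / τ) hwi (by positivity) (fun x hx => by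
      rw [abs_div, abs_mul, abs_of_pos hτ0, abs_of_nonneg (hr0 x)]
      have := hqX x hx
      have := hB x
      have := hr0 x
      gcongr)
    refine ⟨(X * B / τ).toNNReal, LipschitzOnWith.of_dist_le_mul fun x hx y hy => ?_⟩
    refine le_trans (le_of_eq ?_) (hL.dist_le_mul x hx y hy)
    rw [dist_comm, Real.dist_eq, Real.dist_eq, hbr x hx, hbr y hy]
    congr 1
    linarith [hc x hx, hc y hy]

end
end
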